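/- arXiv:2003.14007 — 9 statements merged into one kernel-verified Lean document; each statement's English description precedes it below -/
import Mathlib

section
/- Let n ≥ 3. Every sequence over the dihedral group D_{2n} of length n + 1 has a nonempty 1-product subsequence of length at most n; moreover, the sequence x·y^{[n−1]} (one copy of x together with n−1 copies of y) is a 1-product free sequence of length n. Hence s_{≤n}(D_{2n}) = n + 1, where s_{≤n}(D_{2n}) is the smallest ℓ such that every sequence over D_{2n} of length ≥ ℓ has a nonempty 1-product subsequence of length at most n. -/
/-- `T` is a 1-product sequence: its terms can be ordered so that their product is `1`. -/
def IsOneProdSeq {G : Type*} [Group G] (T : Multiset G) : Prop :=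
  ∃ l : List G, (l : Multiset G) = T ∧ l.prod = 1

open DihedralGroup in
theorem aux_split {n : ℕ} (S : Multiset (DihedralGroup n)) :
    ∃ A B : List (ZMod n), S = ((A.map r ++ B.map sr : List (DihedralGroup n)) : Multiset _) := by
  induction S using Multiset.induction with
  | empty => exact ⟨[], [], rfl⟩
  | cons a S ih =>
    obtain ⟨A, B, rfl⟩ := ih
    cases a with
    | r i => exact ⟨i :: A, B, rfl⟩
    | sr i =>
      refine ⟨A, i :: B, ?_⟩
      rw [Multiset.cons_coe, Multiset.coe_eq_coe]
      simpa using List.perm_middle.symm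

theorem aux_rprod {n : ℕ} (L : List (ZMod n)) :
    (L.map DihedralGroup.r).prod = DihedralGroup.r L.sum := by
  induction L with
  | nil => rfl
  | cons a L ih => simp [ih]

theorem aux_block {M : Type*} [AddCommGroup M] (L : List M) {i j : ℕ} (h : i ≤ j) :
    (L.take j).sum = (L.take i).sum + ((L.take j).drop i).sum := by
  have := congrArg List.sum (List.take_append_drop i (L.take j))
  rw [List.sum_append, List.take_take, min_eq_left h] at this
  exact this.symm

theorem aux_pair {α : Type*} (L : List α) {i j : ℕ} (hi : i < L.length) (hj : j < L.length)
    (h : i ≠ j) : ∃ l : List α, l.Perm [L[i], L[j]] ∧ l.Sublist L := by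
  rcases lt_or_gt_of_ne h with h | h
  · refine ⟨[L[i], L[j]], List.Perm.refl _, ?_⟩
    have : [L[i], L[j]] = [(⟨i, hi⟩ : Fin L.length), ⟨j, hj⟩].map (fun k => L[k]) := by simp
    rw [this]
    exact List.map_getElem_sublist (by simpa using h)
  · refine ⟨[L[j], L[i]], List.Perm.swap _ _ _, ?_⟩
    have : [L[j], L[i]] = [(⟨j, hj⟩ : Fin L.length), ⟨i, hi⟩].map (fun k => L[k]) := by simp
    rw [this]
    exact List.map_getElem_sublist (by simpa using h)

/-- The collision step. -/
theorem aux_coll {n : ℕ} (A B : List (ZMod n)) (k : ℕ) (hk : k + 2 ≤ n) (hkA : k ≤ A.length)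
    {i i' j j' : ℕ} (hi : i < B.length) (hi' : i' < B.length) (hjj : j ≤ j') (hj' : j' ≤ k)
    (hne : ¬ (i = i' ∧ j = j'))
    (he : B[i] + (A.take j).sum = B[i'] + (A.take j').sum) :
    ∃ T, T ≤ ((A.map DihedralGroup.r ++ B.map DihedralGroup.sr : List (DihedralGroup n)) :
        Multiset (DihedralGroup n)) ∧ T ≠ 0 ∧ Multiset.card T ≤ n ∧ IsOneProdSeq T := by
  rw [aux_block A hjj] at he
  set P := (A.take j').drop j with hP
  have hPl : P.length = j' - j := by simp [hP]; omega
  have hPs : P.Sublist A := (List.drop_sublist _ _).trans (List.take_sublist _ _)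
  by_cases hii : i = i'
  · subst hii
    refine ⟨((P.map DihedralGroup.r : List _) : Multiset _), ?_, ?_, ?_, _, rfl, ?_⟩
    · exact Multiset.coe_le.2 (((hPs.map _).trans (List.sublist_append_left _ _)).subperm)
    · rw [ne_eq, Multiset.coe_eq_zero, List.map_eq_nil_iff, ← List.length_eq_zero_iff]
      omega
    · simp; omega
    · rw [aux_rprod]
      have : P.sum = 0 := by
        have h2 := add_left_cancel he
        simpa using h2
      rw [this]; rfl
  · obtain ⟨l, hl, hs⟩ := aux_pair B hi hi' hii
    refine ⟨((P.map DihedralGroup.r ++ l.map DihedralGroup.sr : List _) : Multiset _),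
      ?_, ?_, ?_, DihedralGroup.sr B[i'] :: (P.map DihedralGroup.r ++ [DihedralGroup.sr B[i]]),
        ?_, ?_⟩
    · exact Multiset.coe_le.2 (((hPs.map _).append (hs.map _)).subperm)
    · have := hl.length_eq
      rw [ne_eq, Multiset.coe_eq_zero, ← List.length_eq_zero_iff]
      simp [this]
    · have := hl.length_eq
      simp [this]; omega
    · rw [Multiset.coe_eq_coe]
      have h1 := (hl.map DihedralGroup.sr).append_left (P.map DihedralGroup.r)
      refine List.Perm.trans ?_ h1.symm
      simp only [List.map_cons, List.map_nil]
      refine List.perm_middle.symm.trans ?_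
      exact List.Perm.append_left _ (List.Perm.swap _ _ _)
    · have h3 : B[i] = B[i'] + P.sum := by
        have : B[i] + (A.take j).sum = (B[i'] + P.sum) + (A.take j).sum := by rw [he]; abel
        exact add_right_cancel this
      rw [List.prod_cons, List.prod_append, aux_rprod]
      simp [h3]

theorem aux_main (n : ℕ) (hn : 3 ≤ n) (S : Multiset (DihedralGroup n))
    (hS : Multiset.card S = n + 1) :
    ∃ T, T ≤ S ∧ T ≠ 0 ∧ Multiset.card T ≤ n ∧ IsOneProdSeq T := by
  haveI : NeZero n := ⟨by omega⟩
  obtain ⟨A, B, rfl⟩ := aux_split S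
  have hlen : A.length + B.length = n + 1 := by simpa using hS
  by_cases hB : 2 ≤ B.length
  · set k := min A.length (n - 2) with hk
    have hcard : Fintype.card (ZMod n) < Fintype.card (Fin B.length × Fin (k + 1)) := by
      simp only [ZMod.card, Fintype.card_prod, Fintype.card_fin]
      rcases le_total A.length (n - 2) with h | h
      · rw [min_eq_left h] at hk
        have hB3 : B.length = n + 1 - A.length := by omega
        obtain ⟨c, hc⟩ : ∃ c, B.length = c + 1 := ⟨B.length - 1, by omega⟩
        have : n = k + c := by omega
        rw [hc, this]; nlinarith [Nat.zero_le (k * c)]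
      · rw [min_eq_right h] at hk
        have : 2 * (k + 1) ≤ B.length * (k + 1) := Nat.mul_le_mul_right _ hB
        omega
    obtain ⟨⟨⟨i, hi⟩, ⟨j, hj⟩⟩, ⟨⟨i', hi'⟩, ⟨j', hj'⟩⟩, hne, he⟩ :=
      Fintype.exists_ne_map_eq_of_card_lt
        (fun p : Fin B.length × Fin (k + 1) => B[p.1.1] + (A.take p.2.1).sum) hcard
    simp only at he
    simp only [ne_eq, Prod.mk.injEq, Fin.mk.injEq] at hne
    rcases le_total j j' with h | h
    · exact aux_coll A B k (by omega) (by omega) hi hi' h (by omega) hne he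
    · exact aux_coll A B k (by omega) (by omega) hi' hi h (by omega)
        (fun hh => hne ⟨hh.1.symm, hh.2.symm⟩) he.symm
  · have hcard : Fintype.card (ZMod n) < Fintype.card (Fin (n + 1)) := by
      simp [ZMod.card]
    have key : ∀ j j' : ℕ, j < j' → j' ≤ n → (A.take j).sum = (A.take j').sum →
        ∃ T, T ≤ ((A.map DihedralGroup.r ++ B.map DihedralGroup.sr : List (DihedralGroup n)) :
        Multiset (DihedralGroup n)) ∧ T ≠ 0 ∧ Multiset.card T ≤ n ∧ IsOneProdSeq T := by
      intro j j' hjj hj' he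
      rw [aux_block A hjj.le] at he
      have hPl : ((A.take j').drop j).length = j' - j := by simp; omega
      have hPs : ((A.take j').drop j).Sublist A :=
        (List.drop_sublist _ _).trans (List.take_sublist _ _)
      generalize (A.take j').drop j = P at *
      refine ⟨((P.map DihedralGroup.r : List _) : Multiset _), ?_, ?_, ?_, _, rfl, ?_⟩
      · exact Multiset.coe_le.2 (((hPs.map _).trans (List.sublist_append_left _ _)).subperm)
      · rw [ne_eq, Multiset.coe_eq_zero, List.map_eq_nil_iff, ← List.length_eq_zero_iff]
        omega
      · simp; omega
      · rw [aux_rprod]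
        have : P.sum = 0 := by simpa using he
        rw [this]; rfl
    obtain ⟨⟨j, hj⟩, ⟨j', hj'⟩, hne, he⟩ :=
      Fintype.exists_ne_map_eq_of_card_lt
        (fun p : Fin (n + 1) => (A.take p.1).sum) hcard
    simp only at he
    simp only [ne_eq, Fin.mk.injEq] at hne
    rcases lt_or_gt_of_ne hne with h | h
    · exact key j j' h (by omega) he
    · exact key j' j h (by omega) he.symm

theorem aux_free (n : ℕ) (hn : 3 ≤ n) (T : Multiset (DihedralGroup n))
    (hT : T ≤ (DihedralGroup.sr 0 ::ₘ
          Multiset.replicate (n - 1) (DihedralGroup.r 1) : Multiset (DihedralGroup n)))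
    (h0 : T ≠ 0) : ¬ IsOneProdSeq T := by
  rintro ⟨l, rfl, hl⟩
  by_cases hm : (DihedralGroup.sr 0 : DihedralGroup n) ∈ l
  · obtain ⟨l1, l2, rfl⟩ := List.append_of_mem hm
    have h1 : ((l1 ++ DihedralGroup.sr 0 :: l2 : List _) : Multiset (DihedralGroup n)) =
        DihedralGroup.sr 0 ::ₘ ((l1 ++ l2 : List _) : Multiset _) := by
      rw [Multiset.cons_coe, Multiset.coe_eq_coe]; exact List.perm_middle
    rw [h1, Multiset.cons_le_cons_iff] at hT
    have h2 : ∀ x ∈ l1 ++ l2, x = DihedralGroup.r 1 := fun x hx =>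
      Multiset.eq_of_mem_replicate (Multiset.mem_of_le hT (Multiset.mem_coe.2 hx))
    have e1 : l1 = List.replicate l1.length (DihedralGroup.r 1) :=
      List.eq_replicate_iff.2 ⟨rfl, fun x hx => h2 x (List.mem_append_left _ hx)⟩
    have e2 : l2 = List.replicate l2.length (DihedralGroup.r 1) :=
      List.eq_replicate_iff.2 ⟨rfl, fun x hx => h2 x (List.mem_append_right _ hx)⟩
    rw [e1, e2, List.prod_append, List.prod_cons, List.prod_replicate, List.prod_replicate,
      DihedralGroup.r_one_pow, DihedralGroup.r_one_pow, DihedralGroup.sr_mul_r,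
      DihedralGroup.r_mul_sr, DihedralGroup.one_def] at hl
    cases hl
  · rw [Multiset.le_cons_of_notMem (by simpa using hm)] at hT
    have e1 : l = List.replicate l.length (DihedralGroup.r 1) :=
      List.eq_replicate_iff.2 ⟨rfl, fun x hx =>
        Multiset.eq_of_mem_replicate (Multiset.mem_of_le hT (Multiset.mem_coe.2 hx))⟩
    have hc := Multiset.card_le_card hT
    simp only [Multiset.coe_card, Multiset.card_replicate] at hc
    rw [e1, List.prod_replicate, DihedralGroup.r_one_pow, DihedralGroup.one_def,
      DihedralGroup.r.injEq, ZMod.natCast_eq_zero_iff] at hl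
    have hpos : 0 < l.length := by
      rw [List.length_pos_iff]; rintro rfl; exact h0 rfl
    have := Nat.le_of_dvd hpos hl
    omega


/-- Let `n ≥ 3`.  Every sequence over `D_{2n}` of length `n + 1` has a nonempty
1-product subsequence of length at most `n`; moreover the sequence `x·y^{[n−1]}` is a
1-product free sequence of length `n`.  Hence `s_{≤n}(D_{2n}) = n + 1`. -/
theorem stmt8 (n : ℕ) (hn : 3 ≤ n) :
    (∀ S : Multiset (DihedralGroup n), Multiset.card S = n + 1 →
        ∃ T, T ≤ S ∧ T ≠ 0 ∧ Multiset.card T ≤ n ∧ IsOneProdSeq T) ∧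
    (∀ T, T ≤ (DihedralGroup.sr 0 ::ₘ
          Multiset.replicate (n - 1) (DihedralGroup.r 1) : Multiset (DihedralGroup n)) →
        T ≠ 0 → ¬ IsOneProdSeq T) ∧
    Multiset.card (DihedralGroup.sr 0 ::ₘ
        Multiset.replicate (n - 1) (DihedralGroup.r 1) : Multiset (DihedralGroup n)) = n ∧
    IsLeast {ℓ : ℕ | ∀ S : Multiset (DihedralGroup n), ℓ ≤ Multiset.card S →
        ∃ T, T ≤ S ∧ T ≠ 0 ∧ Multiset.card T ≤ n ∧ IsOneProdSeq T} (n + 1) := by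

  have hc : Multiset.card (DihedralGroup.sr 0 ::ₘ
        Multiset.replicate (n - 1) (DihedralGroup.r 1) : Multiset (DihedralGroup n)) = n := by
    simp; omega
  refine ⟨aux_main n hn, aux_free n hn, hc, ?_, ?_⟩
  · intro S hS
    obtain ⟨S', hS', hcard⟩ : ∃ S' ≤ S, Multiset.card S' = n + 1 := by
      induction S using Quotient.inductionOn with
      | h L =>
        refine ⟨((L.take (n + 1) : List _) : Multiset _),
          Multiset.coe_le.2 (List.take_sublist _ _).subperm, ?_⟩
        have : n + 1 ≤ L.length := by simpa using hS
        simpa using this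
    obtain ⟨T, hT, h⟩ := aux_main n hn S' hcard
    exact ⟨T, hT.trans hS', h⟩
  · intro l hl
    by_contra hlt
    obtain ⟨T, hT, h0, -, h1⟩ := hl _ (by rw [hc]; omega)
    exact aux_free n hn T hT h0 h1
end

section
/- Let n ≥ 3 and let T₁ be a sequence over N = x·H in the dihedral group D_{2n} with ⌊|T₁|/2⌋ > ⌊log₂ n⌋. Then T₁ has a nonempty 1-product subsequence T₁′ with |T₁′| even and |T₁′| ≤ 2⌊log₂ n⌋ + 2. -/
open DihedralGroup in
lemma exists_pairs (n k : ℕ) : ∀ (T : Multiset (DihedralGroup n)),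
    (∀ g ∈ T, ∃ i : ZMod n, g = sr i) → 2 * k ≤ Multiset.card T →
    ∃ a b : ℕ → ZMod n, ∑ i ∈ Finset.range k, ({sr (a i), sr (b i)} : Multiset (DihedralGroup n)) ≤ T := by
  induction k with
  | zero => intro T _ _; exact ⟨fun _ => 0, fun _ => 0, by simp⟩
  | succ k ih =>
    intro T hT hc
    obtain ⟨x, hx⟩ := Multiset.card_pos_iff_exists_mem.1 (show 0 < Multiset.card T by omega)
    obtain ⟨T', rfl⟩ := Multiset.exists_cons_of_mem hx
    rw [Multiset.card_cons] at hc
    obtain ⟨y, hy⟩ := Multiset.card_pos_iff_exists_mem.1 (show 0 < Multiset.card T' by omega)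
    obtain ⟨T, rfl⟩ := Multiset.exists_cons_of_mem hy
    rw [Multiset.card_cons] at hc
    obtain ⟨u, rfl⟩ := hT x (by simp)
    obtain ⟨v, rfl⟩ := hT y (by simp)
    obtain ⟨a, b, h⟩ := ih T (fun g hg => hT g (by simp [hg])) (by omega)
    refine ⟨fun i => Nat.casesOn i u a, fun i => Nat.casesOn i v b, ?_⟩
    rw [Finset.sum_range_succ']
    have : sr u ::ₘ sr v ::ₘ T = T + {sr u, sr v} := by
      rw [add_comm]; simp [Multiset.insert_eq_cons]
    rw [this]
    exact add_le_add_left h _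

open DihedralGroup in
lemma exists_order (n : ℕ) (a b : ℕ → ZMod n) (A S : Finset ℕ) :
    ∃ l : List (DihedralGroup n),
      (l : Multiset (DihedralGroup n)) = ∑ i ∈ S, ({sr (a i), sr (b i)} : Multiset (DihedralGroup n)) ∧
      l.prod = r (∑ i ∈ S, if i ∈ A then b i - a i else -(b i - a i)) := by
  induction S using Finset.induction_on with
  | empty => exact ⟨[], by simp, by simp⟩
  | insert i S hi ih =>
    obtain ⟨l, hl, hp⟩ := ih
    rw [Finset.sum_insert hi, Finset.sum_insert hi, ← hl]
    by_cases h : i ∈ A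
    · refine ⟨sr (a i) :: sr (b i) :: l, rfl, ?_⟩
      simp [hp, h]
      ring
    · refine ⟨sr (b i) :: sr (a i) :: l, ?_, ?_⟩
      · rw [← Multiset.cons_coe, ← Multiset.cons_coe, Multiset.cons_swap]; rfl
      · simp [hp, h]
        ring

/-- Let `n ≥ 3` and let `T₁` be a sequence over `N = x·H` in `D_{2n}` with
`⌊|T₁|/2⌋ > ⌊log₂ n⌋`.  Then `T₁` has a nonempty 1-product subsequence `T₁'` of even
length with `|T₁'| ≤ 2⌊log₂ n⌋ + 2`. -/
theorem stmt9 (n : ℕ) (hn : 3 ≤ n) (T₁ : Multiset (DihedralGroup n))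
    (hN : ∀ g ∈ T₁, ∃ i : ZMod n, g = DihedralGroup.sr i)
    (hlen : Nat.log 2 n < Multiset.card T₁ / 2) :
    ∃ T₁' , T₁' ≤ T₁ ∧ T₁' ≠ 0 ∧ Even (Multiset.card T₁') ∧
      Multiset.card T₁' ≤ 2 * Nat.log 2 n + 2 ∧ IsOneProdSeq T₁' := by
  have : NeZero n := ⟨by omega⟩
  obtain ⟨a, b, hab⟩ := exists_pairs n (Nat.log 2 n + 1) T₁ hN (by omega)
  obtain ⟨A, hA, B, hB, hne, heq⟩ := Finset.exists_ne_map_eq_of_card_lt_of_maps_to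
    (s := (Finset.range (Nat.log 2 n + 1)).powerset) (t := (Finset.univ : Finset (ZMod n)))
    (f := fun S => ∑ i ∈ S, (b i - a i))
    (by
      rw [Finset.card_powerset, Finset.card_range, Finset.card_univ, ZMod.card]
      exact Nat.lt_pow_succ_log_self (by norm_num) n)
    (fun _ _ => Finset.mem_coe.2 (Finset.mem_univ _))
  rw [Finset.mem_powerset] at hA hB
  have hsub : (A \ B) ∪ (B \ A) ⊆ Finset.range (Nat.log 2 n + 1) :=
    Finset.union_subset (Finset.sdiff_subset.trans hA) (Finset.sdiff_subset.trans hB)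
  have hSne : ((A \ B) ∪ (B \ A)).Nonempty := by
    rw [Finset.nonempty_iff_ne_empty]
    intro h
    rw [Finset.union_eq_empty, Finset.sdiff_eq_empty_iff_subset,
      Finset.sdiff_eq_empty_iff_subset] at h
    exact hne (Finset.Subset.antisymm h.1 h.2)
  have hdisj : Disjoint (A \ B) (B \ A) := disjoint_sdiff_sdiff
  obtain ⟨l, hl, hp⟩ := exists_order n a b A ((A \ B) ∪ (B \ A))
  have hcard : Multiset.card (l : Multiset (DihedralGroup n)) =
      2 * ((A \ B) ∪ (B \ A)).card := by
    rw [hl, Multiset.card_sum]; simp [mul_comm]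
  have hpos := hSne.card_pos
  have hle := Finset.card_le_card hsub
  rw [Finset.card_range] at hle
  refine ⟨l, ?_, ?_, ?_, ?_, l, rfl, ?_⟩
  · rw [hl]
    exact (Finset.sum_le_sum_of_subset hsub).trans hab
  · intro h
    rw [h, Multiset.card_zero] at hcard
    omega
  · rw [hcard]; exact even_two_mul _
  · rw [hcard]; omega
  · rw [hp, Finset.sum_union hdisj]
    have h1 : ∑ i ∈ A \ B, (if i ∈ A then b i - a i else -(b i - a i)) =
        ∑ i ∈ A \ B, (b i - a i) :=
      Finset.sum_congr rfl fun i hi => if_pos (Finset.mem_sdiff.1 hi).1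
    have h2 : ∑ i ∈ B \ A, (if i ∈ A then b i - a i else -(b i - a i)) =
        ∑ i ∈ B \ A, -(b i - a i) :=
      Finset.sum_congr rfl fun i hi => if_neg (Finset.mem_sdiff.1 hi).2
    rw [h1, h2, Finset.sum_neg_distrib, ← sub_eq_add_neg]
    have h4 : ∑ i ∈ A \ B, (b i - a i) - ∑ i ∈ B \ A, (b i - a i) = 0 := by
      have e1 := Finset.sum_inter_add_sum_sdiff A B (fun i => b i - a i)
      have e2 := Finset.sum_inter_add_sum_sdiff B A (fun i => b i - a i)
      rw [Finset.inter_comm] at e2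
      rw [← e1, ← e2] at heq
      rw [sub_eq_zero]; exact add_left_cancel heq
    rw [h4]; rfl
end

section
/- Let n ≥ 3 and let T₂ be a sequence over H = ⟨y⟩ in the dihedral group D_{2n} with ⌊|T₂|/2⌋ > ⌊log₂ n⌋. Then there exist two disjoint nonempty subsequences W₁ and W₂ of T₂ with 1 ≤ |W₁| = |W₂| ≤ ⌊log₂ n⌋ + 1 whose products are equal: π(W₁) = π(W₂). -/
theorem stmt10_prod_r {n : ℕ} {ι : Type} (f : ι → ZMod n) (L : List ι) :
    (L.map (fun i => DihedralGroup.r (f i))).prod = DihedralGroup.r ((L.map f).sum) := by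
  induction L with
  | nil => rfl
  | cons a L ih => simp [ih]

theorem stmt10_exists_list {n : ℕ} (T : Multiset (DihedralGroup n))
    (hH : ∀ g ∈ T, ∃ i : ZMod n, g = DihedralGroup.r i) :
    ∃ l : List (ZMod n), T = ((l.map DihedralGroup.r : List (DihedralGroup n)) :
      Multiset (DihedralGroup n)) := by
  induction T using Multiset.induction with
  | empty => exact ⟨[], rfl⟩
  | cons a T ih =>
    obtain ⟨l, hl⟩ := ih (fun g hg => hH g (Multiset.mem_cons_of_mem hg))
    obtain ⟨i, hi⟩ := hH a (Multiset.mem_cons_self a T)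
    exact ⟨i :: l, by rw [hl, hi]; rfl⟩

/-- Let `n ≥ 3` and let `T₂` be a sequence over `H = ⟨y⟩` in `D_{2n}` with
`⌊|T₂|/2⌋ > ⌊log₂ n⌋`.  Then there exist two disjoint nonempty subsequences `W₁`, `W₂`
of `T₂` (realized by lists `l₁`, `l₂`) with `1 ≤ |W₁| = |W₂| ≤ ⌊log₂ n⌋ + 1` and
`π(W₁) = π(W₂)`. -/
theorem stmt10 (n : ℕ) (hn : 3 ≤ n) (T₂ : Multiset (DihedralGroup n))
    (hH : ∀ g ∈ T₂, ∃ i : ZMod n, g = DihedralGroup.r i)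
    (hlen : Nat.log 2 n < Multiset.card T₂ / 2) :
    ∃ l₁ l₂ : List (DihedralGroup n),
      ((l₁ : Multiset (DihedralGroup n)) + (l₂ : Multiset (DihedralGroup n))) ≤ T₂ ∧
      l₁ ≠ [] ∧ l₁.length = l₂.length ∧ l₁.length ≤ Nat.log 2 n + 1 ∧
      l₁.prod = l₂.prod := by
  obtain ⟨l, rfl⟩ := stmt10_exists_list T₂ hH
  have : NeZero n := ⟨by omega⟩
  set k := Nat.log 2 n + 1 with hk
  have hlk : 2 * k ≤ l.length := by
    simp at hlen
    omega
  have hpow : n < 2 ^ k := Nat.lt_pow_succ_log_self (by norm_num) n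
  let a : Fin k → ZMod n := fun i => l[i.val]'(by omega)
  let b : Fin k → ZMod n := fun i => l[k + i.val]'(by omega)
  let c : Finset (Fin k) → Fin k → ZMod n := fun A i => if i ∈ A then a i else b i
  obtain ⟨A, B, hAB, hf⟩ := Fintype.exists_ne_map_eq_of_card_lt
    (fun A : Finset (Fin k) => ∑ i, c A i) (by simpa [ZMod.card] using hpow)
  let D := symmDiff A B
  have hagree : ∀ i ∈ Dᶜ, c A i = c B i := by
    intro i hi
    have : i ∈ A ↔ i ∈ B := by
      simp only [D, Finset.mem_compl, Finset.mem_symmDiff] at hi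
      tauto
    simp [c, this]
  have hsum : ∑ i ∈ D, c A i = ∑ i ∈ D, c B i := by
    have h1 := Finset.sum_add_sum_compl D (c A)
    have h2 := Finset.sum_add_sum_compl D (c B)
    rw [Finset.sum_congr rfl hagree] at h1
    have h3 : ∑ i, c A i = ∑ i, c B i := hf
    rw [← h1, ← h2] at h3
    exact add_right_cancel h3
  have hcard : D.card ≤ k := by simpa using Finset.card_le_univ D
  have hD : D ≠ ∅ := fun h => hAB (symmDiff_eq_bot.mp h)
  refine ⟨D.toList.map (fun i => DihedralGroup.r (c A i)),
    D.toList.map (fun i => DihedralGroup.r (c B i)), ?_, ?_, ?_, ?_, ?_⟩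
  · have hle : D.val.map (c A) + D.val.map (c B) ≤ (l : Multiset (ZMod n)) := by
      have e1 : D.val.map (c A) + D.val.map (c B) = D.val.map a + D.val.map b := by
        have h : ∀ f : Fin k → ZMod n, D.val.map f = ∑ i ∈ D, {f i} := by
          intro f
          rw [← Multiset.sum_map_singleton (D.val.map f), Multiset.map_map]
          rfl
        rw [h, h, h, h, ← Finset.sum_add_distrib, ← Finset.sum_add_distrib]
        refine Finset.sum_congr rfl fun i hi => ?_
        simp only [D, Finset.mem_symmDiff] at hi
        rcases hi with ⟨h1, h2⟩ | ⟨h1, h2⟩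
        · simp [c, h1, h2]
        · simp [c, h1, h2, add_comm]
      have hsub : D.val ≤ (Finset.univ : Finset (Fin k)).val :=
        Finset.val_le_iff.mpr (Finset.subset_univ D)
      rw [e1]
      refine (add_le_add (Multiset.map_le_map hsub) (Multiset.map_le_map hsub)).trans ?_
      have ea : (Finset.univ : Finset (Fin k)).val.map a = (l.take k : List _) := by
        rw [Fin.univ_val_map]
        congr 1
        apply List.ext_getElem
        · simp; omega
        · intro i h1 h2
          rw [List.getElem_ofFn]
          simp only [a, List.getElem_take, List.getElem_drop]
      have eb : (Finset.univ : Finset (Fin k)).val.map b = ((l.drop k).take k : List _) := by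
        rw [Fin.univ_val_map]
        congr 1
        apply List.ext_getElem
        · simp; omega
        · intro i h1 h2
          rw [List.getElem_ofFn]
          simp only [b, List.getElem_take, List.getElem_drop]
      rw [ea, eb, Multiset.coe_add, Multiset.coe_le]
      calc (l.take k ++ (l.drop k).take k).Subperm (l.take k ++ l.drop k) :=
            (List.Sublist.append_left (List.take_sublist _ _) _).subperm
        _ = l := List.take_append_drop k l
    have := Multiset.map_le_map (f := DihedralGroup.r) hle
    rw [Multiset.map_add, Multiset.map_map, Multiset.map_map, Multiset.map_coe] at this
    rw [← Multiset.map_coe, ← Multiset.map_coe, Finset.coe_toList]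
    exact this
  · simpa using hD
  · simp
  · simpa using hcard
  · rw [stmt10_prod_r, stmt10_prod_r, Finset.sum_map_toList, Finset.sum_map_toList, hsum]
end

section
/- Let n ≥ 2. Every sequence over the dihedral group D_{2n} of length at least 2⌊log₂ n⌋ + 2 has a nonempty ±-1-product subsequence; that is, D_±(D_{2n}) ≤ 2⌊log₂ n⌋ + 2. -/
/-- `T` is a ±-1-product sequence: its terms can be ordered as `g₁, …, g_ℓ` so that
`g₁^{ε₁} ⋯ g_ℓ^{ε_ℓ} = 1` for some signs `ε_i ∈ {1, −1}`. -/
def IsPMOneProd {G : Type*} [Group G] (T : Multiset G) : Prop :=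
  ∃ l : List G, (l : Multiset G) = T ∧
    ∃ ε : Fin l.length → ℤ, (∀ i, ε i = 1 ∨ ε i = -1) ∧
      (List.ofFn fun i : Fin l.length => l.get i ^ ε i).prod = 1

/-- `T` can be ordered and signed so that the product is `g`. -/
def PMProd {G : Type*} [Group G] (T : Multiset G) (g : G) : Prop :=
  ∃ l l' : List G, (l : Multiset G) = T ∧
    List.Forall₂ (fun a b => b = a ∨ b = a⁻¹) l l' ∧ l'.prod = g

lemma PMProd.add {G : Type*} [Group G] {T T' : Multiset G} {g g' : G}
    (h : PMProd T g) (h' : PMProd T' g') : PMProd (T + T') (g * g') := by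
  obtain ⟨l, m, hl, hm, hp⟩ := h
  obtain ⟨l', m', hl', hm', hp'⟩ := h'
  refine ⟨l ++ l', m ++ m', ?_, List.rel_append hm hm', ?_⟩
  · rw [← hl, ← hl']; simp
  · simp [hp, hp']

lemma PMProd.isPMOneProd {G : Type*} [Group G] {T : Multiset G}
    (h : PMProd T 1) : IsPMOneProd T := by
  classical
  obtain ⟨l, m, hl, hm, hp⟩ := h
  refine ⟨l, hl, fun i => if m.get (i.cast hm.length_eq) = l.get i then 1 else -1, ?_, ?_⟩
  · intro i; dsimp only; split_ifs <;> simp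
  · rw [← hp]
    congr 1
    apply List.ext_get
    · simp [hm.length_eq]
    · intro i h1 h2
      have h3 : i < l.length := by simpa using h1
      have := hm.get h3 h2
      simp only [List.get_eq_getElem] at this
      simp only [List.get_eq_getElem, List.getElem_ofFn, Fin.val_cast]
      split_ifs with hh
      · simp [hh]
      · rcases this with h | h
        · exact absurd h hh
        · simp [h]

lemma pmprod_sum {n : ℕ} {ι : Type*} [DecidableEq ι] (b : ι → Multiset (DihedralGroup n))
    (c : ι → ZMod n) (h : ∀ i, PMProd (b i) (DihedralGroup.r (c i))) (A : Finset ι) :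
    PMProd (∑ i ∈ A, b i) (DihedralGroup.r (∑ i ∈ A, c i)) := by
  induction A using Finset.induction_on with
  | empty => exact ⟨[], [], rfl, List.Forall₂.nil, by simp⟩
  | insert a s ha ih =>
    rw [Finset.sum_insert ha, Finset.sum_insert ha, ← DihedralGroup.r_mul_r]
    exact (h a).add ih

/-- Splitting into blocks. -/
lemma exists_blocks {n : ℕ} (k : ℕ) : ∀ S : Multiset (DihedralGroup n), 2 * k ≤ S.card →
    ∃ (b : Fin k → Multiset (DihedralGroup n)) (c : Fin k → ZMod n),
      (∑ i, b i) ≤ S ∧ ∀ i, b i ≠ 0 ∧ PMProd (b i) (DihedralGroup.r (c i)) ∧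
        PMProd (b i) (DihedralGroup.r (-c i)) := by
  induction k with
  | zero => intro S _; exact ⟨Fin.elim0, Fin.elim0, by simp, fun i => i.elim0⟩
  | succ k ih =>
    intro S hS
    have key : ∃ (b : Multiset (DihedralGroup n)) (c : ZMod n) (S' : Multiset (DihedralGroup n)),
        S = b + S' ∧ b.card ≤ 2 ∧ b ≠ 0 ∧ PMProd b (DihedralGroup.r c) ∧
          PMProd b (DihedralGroup.r (-c)) := by
      by_cases hr : ∃ c : ZMod n, DihedralGroup.r c ∈ S
      · obtain ⟨c, hc⟩ := hr
        obtain ⟨S', rfl⟩ := Multiset.exists_cons_of_mem hc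
        refine ⟨{DihedralGroup.r c}, c, S', by simp, by simp, by simp, ?_, ?_⟩
        · exact ⟨[DihedralGroup.r c], [DihedralGroup.r c], by simp, by simp, by simp⟩
        · exact ⟨[DihedralGroup.r c], [DihedralGroup.r (-c)], by simp, by simp, by simp⟩
      · obtain ⟨x, hx⟩ := Multiset.card_pos_iff_exists_mem.1 (show 0 < S.card by omega)
        obtain ⟨S₁, rfl⟩ := Multiset.exists_cons_of_mem hx
        rw [Multiset.card_cons] at hS
        obtain ⟨y, hy⟩ := Multiset.card_pos_iff_exists_mem.1 (show 0 < S₁.card by omega)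
        obtain ⟨S₂, rfl⟩ := Multiset.exists_cons_of_mem hy
        rcases x with u | u
        · exact absurd ⟨u, hx⟩ hr
        rcases y with v | v
        · exact absurd ⟨v, by simp⟩ hr
        refine ⟨{DihedralGroup.sr u, DihedralGroup.sr v}, v - u, S₂, by simp, by simp,
          by simp, ?_, ?_⟩
        · exact ⟨[DihedralGroup.sr u, DihedralGroup.sr v],
            [DihedralGroup.sr u, DihedralGroup.sr v], rfl, by simp, by simp⟩
        · exact ⟨[DihedralGroup.sr v, DihedralGroup.sr u],
            [DihedralGroup.sr v, DihedralGroup.sr u], Multiset.coe_eq_coe.2 (List.Perm.swap _ _ _),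
            by simp, by simp⟩
    obtain ⟨b₀, c₀, S', rfl, hcard, h₀⟩ := key
    rw [Multiset.card_add] at hS
    obtain ⟨b, c, hle, hb⟩ := ih S' (by omega)
    refine ⟨Fin.cons b₀ b, Fin.cons c₀ c, ?_, ?_⟩
    · rw [Fin.sum_univ_succ]
      simpa using hle
    · intro i
      refine Fin.cases ?_ (fun j => ?_) i
      · simpa using h₀
      · simpa using hb j

theorem stmt11 (n : ℕ) (hn : 2 ≤ n) :
    ∀ S : Multiset (DihedralGroup n), 2 * Nat.log 2 n + 2 ≤ Multiset.card S →
      ∃ T, T ≤ S ∧ T ≠ 0 ∧ IsPMOneProd T := by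
  intro S hS
  have : NeZero n := ⟨by omega⟩
  obtain ⟨b, c, hle, hb⟩ := exists_blocks (Nat.log 2 n + 1) S (by omega)
  have hlt : Fintype.card (ZMod n) < Fintype.card (Finset (Fin (Nat.log 2 n + 1))) := by
    rw [ZMod.card, Fintype.card_finset, Fintype.card_fin]
    exact Nat.lt_pow_succ_log_self (by norm_num) n
  obtain ⟨A, A', hne, heq⟩ := Fintype.exists_ne_map_eq_of_card_lt
    (fun A : Finset (Fin (Nat.log 2 n + 1)) => ∑ i ∈ A, c i) hlt
  have hdisj : Disjoint (A \ A') (A' \ A) := disjoint_sdiff_sdiff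
  refine ⟨∑ i ∈ (A \ A') ∪ (A' \ A), b i, ?_, ?_, ?_⟩
  · exact (Finset.sum_le_sum_of_subset (Finset.subset_univ _)).trans hle
  · intro h0
    have h1 : ∀ i ∈ (A \ A') ∪ (A' \ A), b i = 0 := Finset.sum_eq_zero_iff.1 h0
    apply hne
    ext i
    by_contra hcon
    refine (hb i).1 (h1 i ?_)
    simp only [Finset.mem_union, Finset.mem_sdiff]
    tauto
  · apply PMProd.isPMOneProd
    rw [Finset.sum_union hdisj]
    have h1 := (pmprod_sum b c (fun i => (hb i).2.1) (A \ A')).add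
      (pmprod_sum b (fun i => -c i) (fun i => (hb i).2.2) (A' \ A))
    convert h1 using 1
    rw [DihedralGroup.r_mul_r, DihedralGroup.one_def, Finset.sum_neg_distrib]
    congr 1
    have e1 := Finset.sum_inter_add_sum_sdiff A A' c
    have e2 := Finset.sum_inter_add_sum_sdiff A' A c
    rw [Finset.inter_comm] at e2
    rw [← e1, ← e2] at heq
    rw [add_left_cancel heq, add_neg_cancel]
end

section
/- Let n ≥ 2 and let S = g₁,…,g_ℓ be a sequence over the dihedral group D_{2n} containing at least one term from N = x·H. If 1 = ∏_{i=1}^{ℓ} g_{τ(i)}^{ε_i} for some permutation τ of {1,…,ℓ} and signs ε_i ∈ {1,−1} (i.e., S is a ±-1-product sequence), then there is a permutation σ of {1,…,ℓ} with ∏_{i=1}^{ℓ} g_{σ(i)} = 1 (i.e., S is a 1-product sequence). -/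
open DihedralGroup in
theorem prod_map_r {n : ℕ} (A : List (ZMod n)) :
    (A.map (r : ZMod n → DihedralGroup n)).prod = r A.sum := by
  induction A with
  | nil => rfl
  | cons a A ih => simp [ih]

open DihedralGroup in
/-- Normal form of a signed product: move all rotations to the front. -/
theorem signed_normal_form {n : ℕ} (l : List (DihedralGroup n)) :
    ∀ ε : Fin l.length → ℤ, (∀ i, ε i = 1 ∨ ε i = -1) →
    ∃ A B R : List (ZMod n),
      (l : Multiset (DihedralGroup n)) =
        (A.map r : List (DihedralGroup n)) + ((B.map r : List (DihedralGroup n)) :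
          Multiset (DihedralGroup n)) + (R.map sr : List (DihedralGroup n)) ∧
      (List.ofFn fun i : Fin l.length => l.get i ^ ε i).prod =
        r (A.sum - B.sum) * (R.map sr).prod := by
  induction l with
  | nil =>
    intro ε _
    exact ⟨[], [], [], by simp, by simp⟩
  | cons g l ih =>
    intro ε hε
    obtain ⟨A, B, R, h1, h2⟩ := ih (fun i => ε i.succ) (fun i => hε i.succ)
    have key : (List.ofFn fun i : Fin (g :: l).length => (g :: l).get i ^ ε i).prod =
        g ^ ε (0 : Fin (l.length + 1)) * (r (A.sum - B.sum) * (R.map sr).prod) := by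
      rw [← h2]
      exact (congrArg List.prod (List.ofFn_succ (n := l.length)
        (f := fun i => (g :: l).get i ^ ε i))).trans List.prod_cons
    rw [key, ← Multiset.cons_coe, h1]
    cases g with
    | r a =>
      rcases hε (0 : Fin (l.length + 1)) with h | h
      · refine ⟨a :: A, B, R, ?_, ?_⟩
        · simp
        · rw [h, ← mul_assoc]
          simp [add_sub_assoc]
      · refine ⟨A, a :: B, R, ?_, ?_⟩
        · simp only [List.map_cons, ← Multiset.cons_coe, Multiset.add_cons, Multiset.cons_add]
        · rw [h, ← mul_assoc]
          have : -a + (A.sum - B.sum) = A.sum - (a + B.sum) := by ring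
          simp [this]
    | sr a =>
      refine ⟨B, A, a :: R, ?_, ?_⟩
      · simp only [List.map_cons, ← Multiset.cons_coe, Multiset.add_cons]
        rw [add_comm (Multiset.ofList (B.map r))]
      · have hs : (sr a : DihedralGroup n) ^ ε (0 : Fin (l.length + 1)) = sr a := by
          rcases hε (0 : Fin (l.length + 1)) with h | h <;> rw [h] <;> simp
        have : a + (A.sum - B.sum) = a - (B.sum - A.sum) := by ring
        rw [hs, ← mul_assoc, List.map_cons, List.prod_cons, ← mul_assoc, sr_mul_r, r_mul_sr, this]

/-- Let `n ≥ 2` and let `S` be a sequence over `D_{2n}` containing at least one term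
from `N = x·H`.  If `S` is a ±-1-product sequence, then `S` is a 1-product sequence. -/
theorem stmt12 (n : ℕ) (hn : 2 ≤ n) (S : Multiset (DihedralGroup n))
    (hN : ∃ g ∈ S, ∃ i : ZMod n, g = DihedralGroup.sr i)
    (hpm : IsPMOneProd S) :
    IsOneProdSeq S := by
  obtain ⟨l, rfl, ε, hε, hp⟩ := hpm
  obtain ⟨A, B, R, h1, h2⟩ := signed_normal_form l ε hε
  rw [hp] at h2
  rw [h1] at hN ⊢
  cases R with
  | nil =>
    obtain ⟨g, hg, i, rfl⟩ := hN
    simp at hg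
  | cons i R =>
    refine ⟨A.map DihedralGroup.r ++ DihedralGroup.sr i ::
      (B.map DihedralGroup.r ++ R.map DihedralGroup.sr), ?_, ?_⟩
    · simp only [List.map_cons, ← Multiset.cons_coe, ← Multiset.coe_add, Multiset.add_cons,
        add_assoc]
    · have : i + B.sum - A.sum = i - (A.sum - B.sum) := by ring
      rw [h2, List.prod_append, List.prod_cons, List.prod_append, prod_map_r, prod_map_r,
        List.map_cons, List.prod_cons]
      simp only [← mul_assoc, DihedralGroup.r_mul_sr, DihedralGroup.sr_mul_r, this]
end

section
/- Let n be an odd positive integer and let S = g₁,…,g_ℓ be a sequence over the cyclic group ℤ/nℤ with ℓ ≥ n. Then there exist a nonempty subset I ⊆ {1,…,ℓ} of odd cardinality and signs ε_i ∈ {1,−1} for i ∈ I such that Σ_{i∈I} ε_i·g_i = 0 in ℤ/nℤ. -/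
/-- The pair `x` is a signed subsum (with length parity) over indices in `s`. -/
def Reach13 {n ℓ : ℕ} (g : Fin ℓ → ZMod n) (s : Finset (Fin ℓ)) (x : ZMod n × ZMod 2) : Prop :=
  ∃ I : Finset (Fin ℓ), I ⊆ s ∧ ∃ ε : Fin ℓ → ℤ, (∀ i, ε i = 1 ∨ ε i = -1) ∧
    (∑ i ∈ I, ε i • g i) = x.1 ∧ (I.card : ZMod 2) = x.2

theorem reach13_zero {n ℓ : ℕ} (g : Fin ℓ → ZMod n) (s : Finset (Fin ℓ)) : Reach13 g s 0 :=
  ⟨∅, by simp, fun _ => 1, by simp, by simp, by simp⟩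

theorem reach13_neg {n ℓ : ℕ} (g : Fin ℓ → ZMod n) (s : Finset (Fin ℓ)) (x : ZMod n × ZMod 2)
    (h : Reach13 g s x) : Reach13 g s (-x) := by
  obtain ⟨I, hI, ε, hε, h1, h2⟩ := h
  refine ⟨I, hI, fun i => - ε i, ?_, ?_, ?_⟩
  · intro i
    rcases hε i with h | h <;> simp [h]
  · simp only [neg_smul, Finset.sum_neg_distrib, h1, Prod.fst_neg]
  · rw [h2, Prod.snd_neg, ZMod.neg_eq_self_mod_two]

theorem reach13_mono {n ℓ : ℕ} (g : Fin ℓ → ZMod n) (s t : Finset (Fin ℓ)) (hst : s ⊆ t)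
    (x : ZMod n × ZMod 2) (h : Reach13 g s x) : Reach13 g t x := by
  obtain ⟨I, hI, h⟩ := h
  exact ⟨I, hI.trans hst, h⟩

theorem reach13_add {n ℓ : ℕ} (g : Fin ℓ → ZMod n) (s : Finset (Fin ℓ)) (a : Fin ℓ) (ha : a ∉ s)
    (x : ZMod n × ZMod 2) (h : Reach13 g s x) : Reach13 g (insert a s) (x + (g a, 1)) := by
  obtain ⟨I, hI, ε, hε, h1, h2⟩ := h
  have haI : a ∉ I := fun h => ha (hI h)
  refine ⟨insert a I, Finset.insert_subset_insert a hI, Function.update ε a 1, ?_, ?_, ?_⟩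
  · intro i
    by_cases hi : i = a
    · subst hi; simp
    · simp [hi, hε i]
  · rw [Finset.sum_insert haI]
    have : ∑ i ∈ I, (Function.update ε a 1) i • g i = ∑ i ∈ I, ε i • g i := by
      apply Finset.sum_congr rfl
      intro i hi
      have : i ≠ a := fun h => haI (h ▸ hi)
      simp [this]
    rw [this, h1]
    simp [add_comm]
  · rw [Finset.card_insert_of_notMem haI]
    simp [h2]

open Classical in
theorem reach13_card {n ℓ : ℕ} [NeZero n] (hodd : Odd n) (g : Fin ℓ → ZMod n)
    (s : Finset (Fin ℓ)) : ¬ Reach13 g s (0, 1) →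
    2 * s.card + 1 ≤ (Finset.univ.filter (Reach13 g s)).card := by
  induction s using Finset.induction_on with
  | empty =>
    intro _
    simp only [Finset.card_empty, mul_zero, zero_add]
    exact Finset.card_pos.mpr ⟨0, by simp [reach13_zero]⟩
  | insert a s ha ih =>
    intro hno
    have hsub := Finset.subset_insert a s
    have ih' := ih (fun h => hno (reach13_mono g _ _ hsub _ h))
    obtain ⟨x, hx1, hx2⟩ : ∃ x, Reach13 g (insert a s) x ∧ ¬ Reach13 g s x := by
      by_contra hcon
      push Not at hcon
      have hk : ∀ k : ℕ, Reach13 g s (k • (g a, 1)) := by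
        intro k
        induction k with
        | zero => simpa using reach13_zero g s
        | succ k ihk =>
          rw [succ_nsmul]
          exact hcon _ (reach13_add g s a ha _ ihk)
      have h := hk n
      have e : n • ((g a, 1) : ZMod n × ZMod 2) = (0, 1) := by
        ext
        · simp
        · simpa using (ZMod.natCast_eq_one_iff_odd).mpr hodd
      rw [e] at h
      exact hno (reach13_mono g _ _ hsub _ h)
    have hne : x ≠ -x := by
      intro h
      obtain ⟨u, v⟩ := x
      have hu : u = -u := congrArg Prod.fst h
      have hu0 : u = 0 := by
        have := (ZMod.neg_eq_self_iff u).mp hu.symm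
        rcases this with h | h
        · exact h
        · exfalso
          obtain ⟨k, hk⟩ := hodd
          omega
      subst hu0
      fin_cases v
      · exact hx2 (reach13_zero g s)
      · exact hno hx1
    have hx2' : ¬ Reach13 g s (-x) := fun h => hx2 (by simpa using reach13_neg g s _ h)
    have hsubset : insert x (insert (-x) (Finset.univ.filter (Reach13 g s))) ⊆
        Finset.univ.filter (Reach13 g (insert a s)) := by
      intro y hy
      simp only [Finset.mem_insert, Finset.mem_filter, Finset.mem_univ, true_and] at hy ⊢
      rcases hy with rfl | rfl | h
      · exact hx1
      · exact reach13_neg g _ _ hx1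
      · exact reach13_mono g _ _ hsub _ h
    have hc := Finset.card_le_card hsubset
    rw [Finset.card_insert_of_notMem (by simp [hne, hx2]),
      Finset.card_insert_of_notMem (by simp [hx2'])] at hc
    rw [Finset.card_insert_of_notMem ha]
    omega

/-- Let `n` be an odd positive integer and let `g₁, …, g_ℓ` be a sequence over `ℤ/nℤ`
with `ℓ ≥ n`.  Then there is a nonempty index set `I` of odd cardinality and signs
`ε_i ∈ {1, −1}` such that `∑_{i ∈ I} ε_i · g_i = 0`. -/
theorem stmt13 (n : ℕ) (hn : 0 < n) (hodd : Odd n) (ℓ : ℕ) (hl : n ≤ ℓ)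
    (g : Fin ℓ → ZMod n) :
    ∃ I : Finset (Fin ℓ), I.Nonempty ∧ Odd I.card ∧
      ∃ ε : Fin ℓ → ℤ, (∀ i, ε i = 1 ∨ ε i = -1) ∧
        (∑ i ∈ I, ε i • g i) = 0 := by
  classical
  haveI : NeZero n := ⟨hn.ne'⟩
  by_cases h : Reach13 g Finset.univ (0, 1)
  · obtain ⟨I, -, ε, hε, h1, h2⟩ := h
    have ho : Odd I.card := (ZMod.natCast_eq_one_iff_odd).mp h2
    exact ⟨I, Finset.card_pos.mp ho.pos, ho, ε, hε, h1⟩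
  · exfalso
    have h1 := reach13_card hodd g Finset.univ h
    have h2 := Finset.card_le_univ (Finset.univ.filter (Reach13 g Finset.univ))
    rw [Fintype.card_prod, ZMod.card, ZMod.card] at h2
    rw [Finset.card_univ, Fintype.card_fin] at h1
    have h3 : 2 * ℓ + 1 ≤ n * 2 := le_trans (by convert h1) h2
    omega
end

section
/- Let n ≥ 3 be an odd positive integer. Then s_{nℕ}(D_{2n}) = 2n + ⌊log₂ n⌋. -/
set_option linter.all false

section development
open Finset



/-- signed representability of `z` by the full index set `E` -/
def SRep {ι M : Type*} [AddCommGroup M] (w : ι → M) (E : Finset ι) (z : M) : Prop :=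
  ∃ ε : ι → ℤˣ, ∑ i ∈ E, ((ε i : ℤˣ) : ℤ) • w i = z

section rep
variable {ι M : Type*} [DecidableEq ι] [AddCommGroup M] {w : ι → M}

lemma SRep.union {E D : Finset ι} {z z' : M} (h : Disjoint E D) (h1 : SRep w E z)
    (h2 : SRep w D z') : SRep w (E ∪ D) (z + z') := by
  obtain ⟨e, he⟩ := h1
  obtain ⟨d, hd⟩ := h2
  refine ⟨fun i => if i ∈ E then e i else d i, ?_⟩
  rw [sum_union h, ← he, ← hd]
  congr 1
  · exact sum_congr rfl fun i hi => by simp [hi]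
  · refine sum_congr rfl fun i hi => ?_
    have : i ∉ E := fun h' => (Finset.disjoint_left.mp h h' hi)
    simp [this]

lemma SRep.neg {E : Finset ι} {z : M} (h1 : SRep w E z) : SRep w E (-z) := by
  obtain ⟨e, he⟩ := h1
  refine ⟨fun i => - e i, ?_⟩
  rw [← he, ← sum_neg_distrib]
  exact sum_congr rfl fun i hi => by simp

lemma SRep.empty : SRep w (∅ : Finset ι) 0 := ⟨fun _ => 1, by simp⟩

lemma SRep.single (i : ι) : SRep w {i} (w i) := ⟨fun _ => 1, by simp⟩

lemma SRep.pair {i j : ι} (h : i ≠ j) : SRep w {i, j} (w i - w j) := by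
  have := (SRep.single (w := w) i).union (D := {j}) (by simpa using h) (SRep.single j).neg
  rw [sub_eq_add_neg]
  exact this

lemma SRep.all (E : Finset ι) : SRep w E (∑ i ∈ E, w i) := ⟨fun _ => 1, by simp⟩

/-- pigeonhole -/
lemma pigeon {H : AddSubgroup M} {Y : Finset ι} [Finite (M ⧸ H)] (h : H.index < 2 ^ #Y) :
    ∃ J ⊆ Y, J.Nonempty ∧ ∃ g ∈ H, SRep w J g := by
  classical
  have := Fintype.ofFinite (M ⧸ H)
  have hc : Fintype.card (M ⧸ H) < #(Y.powerset) := by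
    rw [card_powerset]
    rwa [AddSubgroup.index, Nat.card_eq_fintype_card] at h
  obtain ⟨A, hA, B, hB, hne, hAB⟩ := Finset.exists_ne_map_eq_of_card_lt_of_maps_to
    (s := Y.powerset) (t := (univ : Finset (M ⧸ H)))
    (f := fun A => (QuotientAddGroup.mk (∑ i ∈ A, w i) : M ⧸ H)) (by simpa using hc)
    (fun _ _ => by simp)
  rw [mem_powerset] at hA hB
  have key : ∑ i ∈ A \ B, w i - ∑ i ∈ B \ A, w i ∈ H := by
    rw [QuotientAddGroup.eq] at hAB
    have := H.neg_mem hAB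
    rw [sum_sdiff_sub_sum_sdiff]
    convert this using 1
    abel
  refine ⟨A \ B ∪ B \ A, ?_, ?_, _, key, ?_⟩
  · exact union_subset (sdiff_subset.trans hA) (sdiff_subset.trans hB)
  · rw [nonempty_iff_ne_empty]
    intro h0
    rw [union_eq_empty, sdiff_eq_empty_iff_subset, sdiff_eq_empty_iff_subset] at h0
    exact hne (subset_antisymm h0.1 h0.2)
  · rw [sub_eq_add_neg]
    exact (SRep.all _).union (disjoint_sdiff_sdiff) (SRep.all _).neg

/-- controlled length signed zero-sums -/
lemma pigeon_range {H : AddSubgroup M} {Y : Finset ι} [Finite (M ⧸ H)] {κ : ℕ}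
    (h : H.index < 2 ^ (κ + 1)) (q : ℕ) (hq : q + κ ≤ #Y) :
    ∃ J ⊆ Y, q ≤ #J ∧ #J ≤ q + κ ∧ ∃ g ∈ H, SRep w J g := by
  induction q with
  | zero => exact ⟨∅, by simp, by simp, by simp, 0, H.zero_mem, SRep.empty⟩
  | succ q ih =>
    obtain ⟨J, hJ, h1, h2, g, hg, hr⟩ := ih (by omega)
    by_cases h3 : q + 1 ≤ #J
    · exact ⟨J, hJ, h3, by omega, g, hg, hr⟩
    have h4 : κ + 1 ≤ #(Y \ J) := by
      rw [card_sdiff_of_subset hJ]; omega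
    obtain ⟨Y', hY', hc⟩ := exists_subset_card_eq h4
    obtain ⟨B, hB, hBn, g', hg', hr'⟩ := pigeon (w := w) (H := H) (Y := Y') (by rwa [hc])
    have hd : Disjoint J B := disjoint_of_subset_right (hB.trans hY') disjoint_sdiff
    refine ⟨J ∪ B, union_subset hJ ((hB.trans hY').trans sdiff_subset), ?_, ?_, g + g',
      H.add_mem hg hg', hr.union hd hr'⟩
    · rw [card_union_of_disjoint hd]; have := hBn.card_pos; omega
    · rw [card_union_of_disjoint hd]; have := card_le_card hB; omega

lemma SRep.map {M' : Type*} [AddCommGroup M'] (φ : M →+ M') {E : Finset ι} {z : M}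
    (h : SRep w E z) : SRep (fun i => φ (w i)) E (φ z) := by
  obtain ⟨e, he⟩ := h
  exact ⟨e, by rw [← he, map_sum]; simp⟩
end rep

/-- greedy filling of a subgroup by subset sums -/
lemma greedy {κ Q : Type*} [DecidableEq κ] [AddCommGroup Q] [Finite Q] (I : Finset κ) (d : κ → Q)
    (hd : ∀ i ∈ I, d i ≠ 0) (hI : Nat.card Q ≤ #I + 1) (hQ : 1 < Nat.card Q) :
    ∃ L : AddSubgroup Q, L ≠ ⊥ ∧ ∃ J ⊆ I, #J + 1 ≤ Nat.card L ∧ (∀ j ∈ J, d j ∈ L) ∧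
      ∀ g ∈ L, ∃ J' ⊆ J, ∑ j ∈ J', d j = g := by
  classical
  have := Fintype.ofFinite Q
  -- minimal subgroup with many units
  let p : ℕ → Prop := fun c => ∃ L : AddSubgroup Q, L ≠ ⊥ ∧ Nat.card L = c ∧
    Nat.card L ≤ #(I.filter (fun i => d i ∈ L)) + 1
  have hp : ∃ c, p c := by
    refine ⟨_, ⊤, ?_, rfl, ?_⟩
    · intro h
      have h2 : Nat.card (⊤ : AddSubgroup Q) = 1 := by rw [h]; simp
      rw [AddSubgroup.card_top] at h2; omega
    · simpa using hI
  obtain ⟨L, hL, hLc, hLI⟩ := Nat.find_spec hp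
  have hmin : ∀ L' : AddSubgroup Q, L' ≠ ⊥ → 
      Nat.card L' ≤ #(I.filter (fun i => d i ∈ L')) + 1 → Nat.card L ≤ Nat.card L' := by
    intro L' h1 h2
    rw [hLc]
    exact Nat.find_min' hp ⟨L', h1, rfl, h2⟩
  set I0 := I.filter (fun i => d i ∈ L) with hI0
  let Sg : Finset κ → Finset Q := fun J => J.powerset.image (fun A => ∑ j ∈ A, d j)
  obtain ⟨J, hJ, hJmax⟩ := Finset.exists_max_image
    (I0.powerset.filter (fun J => #J + 1 ≤ #(Sg J))) (fun J => #J)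
    ⟨∅, by simp [Sg]⟩
  simp only [mem_filter, mem_powerset] at hJ hJmax
  obtain ⟨hJI, hJc⟩ := hJ
  have hJL : ∀ j ∈ J, d j ∈ L := fun j hj => by
    have := hJI hj
    rw [hI0, mem_filter] at this; exact this.2
  have hSL : ∀ x ∈ Sg J, x ∈ L := by
    intro x hx
    simp only [Sg, mem_image, mem_powerset] at hx
    obtain ⟨A, hA, rfl⟩ := hx
    exact L.sum_mem fun j hj => hJL j (hA hj)
  have hS0 : (0 : Q) ∈ Sg J := by
    simp only [Sg, mem_image, mem_powerset]
    exact ⟨∅, by simp, by simp⟩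
  -- stabilizer
  let L1 : AddSubgroup Q := 
    { carrier := {x | ∀ y, y ∈ Sg J ↔ x + y ∈ Sg J}
      zero_mem' := by intro y; simp
      add_mem' := by
        intro a b ha hb y
        rw [add_assoc, ← ha, ← hb]
      neg_mem' := by
        intro a ha y
        rw [ha (-a + y)]; simp }
  have hL1 : ∀ x, x ∈ L1 ↔ ∀ y, y ∈ Sg J ↔ x + y ∈ Sg J := fun x => Iff.rfl
  have hstab : ∀ i ∈ I0 \ J, d i ∈ L1 := by
    intro i hi
    rw [mem_sdiff] at hi
    have h1 : ¬ (#(insert i J) + 1 ≤ #(Sg (insert i J))) := by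
      intro h
      have := hJmax (insert i J) ⟨insert_subset hi.1 hJI, h⟩
      rw [card_insert_of_notMem hi.2] at this; omega
    rw [card_insert_of_notMem hi.2] at h1
    have h2 : Sg J ⊆ Sg (insert i J) := image_subset_image (powerset_mono.mpr (subset_insert _ _))
    have h3 : Sg J = Sg (insert i J) := eq_of_subset_of_card_le h2 (by omega)
    have h4 : ∀ y ∈ Sg J, d i + y ∈ Sg J := by
      intro y hy
      simp only [Sg, mem_image, mem_powerset] at hy
      obtain ⟨A, hA, rfl⟩ := hy
      rw [h3]
      simp only [Sg, mem_image, mem_powerset]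
      exact ⟨insert i A, insert_subset_insert _ hA, by rw [sum_insert (fun h => hi.2 (hA h))]⟩
    have h5 : (Sg J).image (fun y => d i + y) = Sg J := by
      apply eq_of_subset_of_card_le
      · intro x hx
        rw [mem_image] at hx
        obtain ⟨y, hy, rfl⟩ := hx
        exact h4 y hy
      · rw [card_image_of_injective _ (add_right_injective _)]
    rw [hL1]
    intro y
    refine ⟨h4 y, fun h => ?_⟩
    rw [← h5, mem_image] at h
    obtain ⟨y', hy', h6⟩ := h
    rwa [← add_left_cancel h6]
  have hL1S : ∀ x ∈ L1, x ∈ Sg J := by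
    intro x hx
    have := ((hL1 x).mp hx 0).mp hS0
    simpa using this
  have hSle : #(Sg J) ≤ Nat.card L := by
    have : Nat.card (Sg J : Set Q) ≤ Nat.card (L : Set Q) := 
      Nat.card_mono (Set.toFinite _) hSL
    simpa using this
  by_cases hfull : ∀ g ∈ L, g ∈ Sg J
  · refine ⟨L, hL, J, hJI.trans (filter_subset _ _), by omega, hJL, ?_⟩
    intro g hg
    have := hfull g hg
    simpa only [Sg, mem_image, mem_powerset] using this
  exfalso
  push Not at hfull
  obtain ⟨y, hyL, hyS⟩ := hfull
  have hcard : #(Sg J) + Nat.card L1 ≤ Nat.card L := by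
    have h1 : Disjoint (Sg J) ((univ.filter (· ∈ L1)).image (fun x => x + y)) := by
      rw [Finset.disjoint_left]
      intro a ha hb
      simp only [mem_image, mem_filter, mem_univ, true_and] at hb
      obtain ⟨x, hx, rfl⟩ := hb
      exact hyS (((hL1 x).mp hx y).mpr ha)
    have h2 : Nat.card L1 = #((univ.filter (· ∈ L1)).image (fun x => x + y)) := by
      rw [card_image_of_injective _ (add_left_injective _), Nat.card_eq_fintype_card,
        Fintype.card_subtype]
    have h3 : Nat.card L = #(univ.filter (· ∈ L)) := by
      rw [Nat.card_eq_fintype_card, Fintype.card_subtype]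
    rw [h2, h3, ← card_union_of_disjoint h1]
    apply card_le_card
    intro a ha
    simp only [mem_union, mem_image, mem_filter, mem_univ, true_and] at ha ⊢
    rcases ha with ha | ⟨x, hx, rfl⟩
    · exact hSL a ha
    · exact L.add_mem (hSL x (hL1S x hx)) hyL
  have h6 : Nat.card L1 ≤ #(I0 \ J) := by
    rw [card_sdiff_of_subset hJI]; omega
  have h7 : I0 \ J ⊆ I.filter (fun i => d i ∈ L1) := by
    intro i hi
    rw [mem_filter]
    refine ⟨?_, hstab i hi⟩
    exact (mem_filter.mp (mem_sdiff.mp hi).1).1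
  have h8 := card_le_card h7
  have hpos : 0 < #(Sg J) := card_pos.mpr ⟨0, hS0⟩
  have h9 : L1 = ⊥ := by
    by_contra hne
    have := hmin L1 hne (by omega)
    omega
  have h10 : 0 < Nat.card L1 := Nat.card_pos
  obtain ⟨i, hi⟩ := card_pos.mp (by omega : 0 < #(I0 \ J))
  have := hstab i hi
  rw [h9, AddSubgroup.mem_bot] at this
  exact hd i (mem_filter.mp (mem_sdiff.mp hi).1).1 this

section rep2
variable {ι : Type*} [DecidableEq ι]

lemma SRep.biUnion {M κ : Type*} [AddCommGroup M] [DecidableEq κ] {w : ι → M} (J : Finset κ)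
    (U : κ → Finset ι) (z : κ → M)
    (hd : ∀ i ∈ J, ∀ j ∈ J, i ≠ j → Disjoint (U i) (U j)) (h : ∀ i ∈ J, SRep w (U i) (z i)) :
    SRep w (J.biUnion U) (∑ i ∈ J, z i) := by
  induction J using Finset.induction_on with
  | empty => simpa using SRep.empty
  | insert a J ha ih =>
    rw [biUnion_insert, sum_insert ha]
    apply SRep.union
    · rw [disjoint_biUnion_right]
      intro j hj
      exact hd a (mem_insert_self _ _) j (mem_insert_of_mem hj) (fun h' => ha (h' ▸ hj))
    · exact h a (mem_insert_self _ _)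
    · exact ih (fun i hi j hj => hd i (mem_insert_of_mem hi) j (mem_insert_of_mem hj))
        (fun i hi => h i (mem_insert_of_mem hi))

/-- matching lemma -/
lemma matching {α : Type*} (F : Finset ι) (f : ι → α) (K : ℕ) (hK : 0 < K) (hF : 2 * K ≤ #F) :
    (∃ 𝒰 : Finset (Finset ι), #𝒰 = K ∧ (∀ U ∈ 𝒰, ∃ a ∈ F, ∃ b ∈ F, f a ≠ f b ∧ U = {a, b}) ∧
      ∀ U ∈ 𝒰, ∀ V ∈ 𝒰, U ≠ V → Disjoint U V) ∨
    ∃ a ∈ F, ∀ [DecidablePred fun x => f x ≠ f a], #(F.filter (fun x => f x ≠ f a)) < K := by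
  classical
  obtain ⟨K, rfl⟩ : ∃ K', K = K' + 1 := ⟨K - 1, by omega⟩
  -- K disjoint pairs or majority
  have step : ∀ k, k ≤ K → (∃ 𝒰 : Finset (Finset ι), #𝒰 = k + 1 ∧
      (∀ U ∈ 𝒰, ∃ a ∈ F, ∃ b ∈ F, f a ≠ f b ∧ U = {a, b}) ∧
      ∀ U ∈ 𝒰, ∀ V ∈ 𝒰, U ≠ V → Disjoint U V) ∨
      ∃ a ∈ F, #(F.filter (fun x => f x ≠ f a)) < k + 1 := by
    have main : ∀ k, k ≤ K → (∃ 𝒰 : Finset (Finset ι), #𝒰 = k ∧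
      (∀ U ∈ 𝒰, ∃ a ∈ F, ∃ b ∈ F, f a ≠ f b ∧ U = {a, b}) ∧
      ∀ U ∈ 𝒰, ∀ V ∈ 𝒰, U ≠ V → Disjoint U V) → (∃ 𝒰 : Finset (Finset ι), #𝒰 = k + 1 ∧
      (∀ U ∈ 𝒰, ∃ a ∈ F, ∃ b ∈ F, f a ≠ f b ∧ U = {a, b}) ∧
      ∀ U ∈ 𝒰, ∀ V ∈ 𝒰, U ≠ V → Disjoint U V) ∨
      ∃ a ∈ F, #(F.filter (fun x => f x ≠ f a)) < k + 1 := by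
      rintro k hk ⟨𝒰, hc, hU, hd⟩
      have hcU : ∀ U ∈ 𝒰, #U = 2 := by
        intro U hu
        obtain ⟨a, _, b, _, hab, rfl⟩ := hU U hu
        exact card_pair (fun h => hab (by rw [h]))
      set V := 𝒰.biUnion id with hV
      have hVF : V ⊆ F := by
        intro x hx
        rw [hV, mem_biUnion] at hx
        obtain ⟨U, hu, hx⟩ := hx
        obtain ⟨a, ha, b, hb, hab, rfl⟩ := hU U hu
        simp at hx
        rcases hx with rfl | rfl <;> assumption
      have hVc : #V = 2 * k := by
        rw [hV, card_biUnion (t := id) (fun U hu V hv h => hd U hu V hv h)]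
        simp only [id]
        rw [sum_congr rfl hcU]; simp [hc]; ring
      have hRc : 2 ≤ #(F \ V) := by
        rw [card_sdiff_of_subset hVF]; omega
      obtain ⟨c, hcR, c', hc'R, hcc⟩ := one_lt_card.mp (by omega : 1 < #(F \ V))
      rw [mem_sdiff] at hcR hc'R
      -- add helper
      have hnot : ∀ x ∉ V, ∀ U ∈ 𝒰, x ∉ U := by
        intro x hx U hu h
        exact hx (mem_biUnion.mpr ⟨U, hu, h⟩)
      by_cases hall : ∃ x ∈ F \ V, f x ≠ f c
      · left
        obtain ⟨x, hx, hxc⟩ := hall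
        rw [mem_sdiff] at hx
        have hnew : ({x, c} : Finset ι) ∉ 𝒰 := fun h => hnot x hx.2 _ h (by simp)
        refine ⟨insert {x, c} 𝒰, by rw [card_insert_of_notMem hnew, hc], ?_, ?_⟩
        · intro U hu
          rcases mem_insert.mp hu with rfl | hu
          · exact ⟨x, hx.1, c, hcR.1, hxc, rfl⟩
          · exact hU U hu
        · have hdis : ∀ U ∈ 𝒰, Disjoint {x, c} U := by
            intro U hu
            rw [disjoint_insert_left, disjoint_singleton_left]
            exact ⟨hnot x hx.2 U hu, hnot c hcR.2 U hu⟩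
          intro U hu W hw hne
          rcases mem_insert.mp hu with rfl | hu
          · rcases mem_insert.mp hw with rfl | hw
            · exact absurd rfl hne
            · exact hdis W hw
          · rcases mem_insert.mp hw with rfl | hw
            · exact (hdis U hu).symm
            · exact hd U hu W hw hne
      push Not at hall
      by_cases hbad : ∃ U ∈ 𝒰, ∀ x ∈ U, f x ≠ f c
      · left
        obtain ⟨U, hu, hux⟩ := hbad
        obtain ⟨a, ha, b, hb, hab, hUab⟩ := hU U hu
        have hac : f a ≠ f c := hux a (by rw [hUab]; simp)
        have hbc : f b ≠ f c' := by
          rw [hall c' (mem_sdiff.mpr hc'R)]; exact hux b (by rw [hUab]; simp)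
        have hab' : a ≠ b := fun h => hab (by rw [h])
        have haU : a ∈ U := by rw [hUab]; simp
        have hbU : b ∈ U := by rw [hUab]; simp
        have hca := hnot c hcR.2 U hu
        have hc'a := hnot c' hc'R.2 U hu
        have hdis : ∀ W ∈ 𝒰.erase U, Disjoint {a, c} W ∧ Disjoint {b, c'} W := by
          intro W hw
          rw [mem_erase] at hw
          have h1 := hd U hu W hw.2 (Ne.symm hw.1)
          simp only [disjoint_insert_left, disjoint_singleton_left]
          exact ⟨⟨Finset.disjoint_left.mp h1 haU, hnot c hcR.2 W hw.2⟩,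
            Finset.disjoint_left.mp h1 hbU, hnot c' hc'R.2 W hw.2⟩
        have hpp : Disjoint ({a, c} : Finset ι) {b, c'} := by
          simp only [disjoint_insert_left, disjoint_singleton_left, mem_insert, mem_singleton,
            not_or]
          exact ⟨⟨hab', fun h => hc'a (h ▸ haU)⟩, fun h => hca (h ▸ hbU), hcc⟩
        have hn1 : ({b, c'} : Finset ι) ∉ 𝒰.erase U := fun h => 
          hnot c' hc'R.2 _ (mem_of_mem_erase h) (by simp)
        have hn2 : ({a, c} : Finset ι) ∉ insert {b, c'} (𝒰.erase U) := by
          intro h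
          rcases mem_insert.mp h with h | h
          · have := h ▸ hpp
            simp at this
          · exact hnot c hcR.2 _ (mem_of_mem_erase h) (by simp)
        refine ⟨insert {a, c} (insert {b, c'} (𝒰.erase U)), ?_, ?_, ?_⟩
        · rw [card_insert_of_notMem hn2, card_insert_of_notMem hn1, card_erase_of_mem hu, hc]
          have : 0 < #𝒰 := card_pos.mpr ⟨U, hu⟩
          omega
        · intro W hw
          rcases mem_insert.mp hw with rfl | hw
          · exact ⟨a, ha, c, hcR.1, hac, rfl⟩
          rcases mem_insert.mp hw with rfl | hw
          · exact ⟨b, hb, c', hc'R.1, hbc, rfl⟩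
          exact hU W (mem_of_mem_erase hw)
        · intro W hw X hx hne
          rcases mem_insert.mp hw with rfl | hw
          · rcases mem_insert.mp hx with rfl | hx
            · exact absurd rfl hne
            rcases mem_insert.mp hx with rfl | hx
            · exact hpp
            exact (hdis X hx).1
          rcases mem_insert.mp hw with rfl | hw
          · rcases mem_insert.mp hx with rfl | hx
            · exact hpp.symm
            rcases mem_insert.mp hx with rfl | hx
            · exact absurd rfl hne
            exact (hdis X hx).2
          · rcases mem_insert.mp hx with rfl | hx
            · exact (hdis W hw).1.symm
            rcases mem_insert.mp hx with rfl | hx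
            · exact (hdis W hw).2.symm
            exact hd W (mem_of_mem_erase hw) X (mem_of_mem_erase hx) hne
      · right
        push Not at hbad
        refine ⟨c, hcR.1, ?_⟩
        have hsub : F.filter (fun x => f x ≠ f c) ⊆
            𝒰.biUnion (fun U => U.filter (fun x => f x ≠ f c)) := by
          intro x hx
          rw [mem_filter] at hx
          have hxV : x ∈ V := by
            by_contra h
            exact hx.2 (hall x (mem_sdiff.mpr ⟨hx.1, h⟩))
          rw [hV, mem_biUnion] at hxV
          obtain ⟨U, hu, hxU⟩ := hxV
          exact mem_biUnion.mpr ⟨U, hu, mem_filter.mpr ⟨hxU, hx.2⟩⟩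
        have h1 := card_le_card hsub
        have h2 : #(𝒰.biUnion (fun U => U.filter (fun x => f x ≠ f c))) ≤ #𝒰 * 1 := by
          apply card_biUnion_le_card_mul
          intro U hu
          obtain ⟨y, hy, hyc⟩ := hbad U hu
          have : U.filter (fun x => f x ≠ f c) ⊆ U.erase y := by
            intro x hx
            rw [mem_filter] at hx
            rw [mem_erase]
            exact ⟨fun h => hx.2 (h ▸ hyc), hx.1⟩
          have := card_le_card this
          rw [card_erase_of_mem hy, hcU U hu] at this
          omega
        omega
    intro k
    induction k with
    | zero => exact fun h => main 0 h ⟨∅, by simp⟩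
    | succ k ih =>
      intro hk
      rcases ih (by omega) with h | ⟨a, ha, h⟩
      · exact main (k + 1) hk h
      · exact Or.inr ⟨a, ha, by omega⟩
  rcases step K le_rfl with h | ⟨a, ha, h⟩
  · exact Or.inl h
  · right
    refine ⟨a, ha, ?_⟩
    intro inst
    convert h

end rep2

/-- the absorber predicate -/
def Fills {ι : Type*} {n : ℕ} (w : ι → ℤ × ZMod n) (H : AddSubgroup (ZMod n))
    (E : Finset ι) : Prop := ∀ g ∈ H, SRep w E (0, g)

/-- the combinatorial goal -/
def Goal {ι : Type*} {n : ℕ} (w : ι → ℤ × ZMod n) : Prop :=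
  ∃ E : Finset ι, n ∣ #E ∧ E.Nonempty ∧ ((SRep w E 0 ∧ ∃ i ∈ E, (w i).1 = 1) ∨
    ((∀ i ∈ E, (w i).1 = 0) ∧ ∑ i ∈ E, (w i).2 = 0))

section fill
variable {ι : Type*} [DecidableEq ι] {n : ℕ} {w : ι → ℤ × ZMod n} {H : AddSubgroup (ZMod n)}

lemma half_mem (hodd : Odd n) (H : AddSubgroup (ZMod n)) {x : ZMod n} (h : x + x ∈ H) :
    x ∈ H := by
  obtain ⟨m, hm⟩ := hodd
  have h1 : (m + 1) • (x + x) ∈ H := H.nsmul_mem h _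
  have h2 : (m + 1) • (x + x) = x := by
    rw [nsmul_eq_mul]
    have : ((n : ℕ) : ZMod n) = 0 := ZMod.natCast_self n
    rw [hm] at this
    push_cast at this ⊢
    have h3 : (m + 1 : ZMod n) * (x + x) = (2 * m + 1) * x + x := by ring
    rw [h3]
    have h4 : (2 * (m : ZMod n) + 1) = 0 := by
      subst hm; exact_mod_cast this
    rw [h4]; ring
  rwa [h2] at h1

lemma extend [NeZero n] (hodd : Odd n) {E : Finset ι} (hE : Fills w H E)
    (hEc : #E + 2 ≤ 2 * Nat.card H)
    (hm : 1 < H.index) (𝒰 : Finset (Finset ι)) (hU : ∀ U ∈ 𝒰, #U ≤ 2 ∧ ∃ x ∉ H, SRep w U (0, x))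
    (hd : ∀ U ∈ 𝒰, ∀ V ∈ 𝒰, U ≠ V → Disjoint U V) (hdE : ∀ U ∈ 𝒰, Disjoint E U)
    (hc : H.index ≤ #𝒰 + 1) :
    ∃ H' : AddSubgroup (ZMod n), ∃ E' ⊆ E ∪ 𝒰.biUnion id, Nat.card H < Nat.card H' ∧
      Fills w H' E' ∧ #E' + 2 ≤ 2 * Nat.card H' := by
  classical
  have hx : ∀ U : Finset ι, ∃ x, U ∈ 𝒰 → x ∉ H ∧ SRep w U (0, x) := by
    intro U
    by_cases h : U ∈ 𝒰
    · obtain ⟨_, x, h1, h2⟩ := hU U h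
      exact ⟨x, fun _ => ⟨h1, h2⟩⟩
    · exact ⟨0, fun h' => absurd h' h⟩
  choose x hx using hx
  let φ := QuotientAddGroup.mk' H
  obtain ⟨L, hL, J, hJ, hJc, hJL, hfill⟩ := greedy (Q := ZMod n ⧸ H) 𝒰 (fun U => φ (x U + x U))
    (by
      intro U hu h0
      have h1 : x U + x U ∈ H := by
        rwa [QuotientAddGroup.mk'_apply, QuotientAddGroup.eq_zero_iff] at h0
      exact (hx U hu).1 (half_mem hodd H h1))
    hc hm
  have e1 : (L.comap φ).index = L.index :=
    AddSubgroup.index_comap_of_surjective L (QuotientAddGroup.mk'_surjective H)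
  have e2 := (L.comap φ).index_mul_card
  have e3 := L.index_mul_card
  have e4 := H.index_mul_card
  have e5 : Nat.card (ZMod n ⧸ H) = H.index := rfl
  rw [e5] at e3
  rw [Nat.card_zmod] at e2 e4
  have hipos : 0 < L.index := by
    rcases Nat.eq_zero_or_pos L.index with h | h
    · rw [h] at e3; omega
    · exact h
  have hcard : Nat.card (L.comap φ) = Nat.card L * Nat.card H := by
    apply Nat.eq_of_mul_eq_mul_left hipos
    rw [← mul_assoc, e3, e4, ← e1, e2]
  have hL1 : 1 < Nat.card L := by
    by_contra h
    apply hL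
    rw [← AddSubgroup.card_eq_one]
    have : 0 < Nat.card L := Nat.card_pos
    omega
  have hHpos : 0 < Nat.card H := Nat.card_pos
  have hEJ : Disjoint E (J.biUnion id) := by
    rw [disjoint_biUnion_right]; exact fun U hu => hdE U (hJ hu)
  refine ⟨L.comap φ, E ∪ J.biUnion id, union_subset_union_right (biUnion_subset_biUnion_of_subset_left _ hJ), ?_, ?_, ?_⟩
  · rw [hcard]; nlinarith
  · intro g hg
    have hxL : ∀ U ∈ J, x U ∈ L.comap φ := by
      intro U hu
      apply half_mem hodd
      exact hJL U hu
    have hs : φ (g + ∑ U ∈ J, x U) ∈ L := by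
      have : g + ∑ U ∈ J, x U ∈ L.comap φ :=
        AddSubgroup.add_mem _ hg (AddSubgroup.sum_mem _ hxL)
      exact this
    obtain ⟨J', hJ', hsum⟩ := hfill _ hs
    have hrep : SRep w (J.biUnion id) (∑ U ∈ J, if U ∈ J' then ((0 : ℤ), x U) else -(0, x U)) := by
      apply SRep.biUnion (U := id)
      · exact fun i hi j hj => hd i (hJ hi) j (hJ hj)
      · intro U hu
        have := (hx U (hJ hu)).2
        split_ifs
        · exact this
        · exact this.neg
    set y := ∑ U ∈ J, if U ∈ J' then ((0 : ℤ), x U) else -(0, x U) with hy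
    have hy1 : y.1 = 0 := by
      rw [hy, Prod.fst_sum]
      apply sum_eq_zero
      intro U hu; split_ifs <;> simp
    have hy2 : y.2 = ∑ U ∈ J', (x U + x U) - ∑ U ∈ J, x U := by
      have h1 : ∑ U ∈ J', (x U + x U) = ∑ U ∈ J, if U ∈ J' then (x U + x U) else 0 := by
        rw [← sum_filter]
        congr 1
        ext U; simp; exact fun h => hJ' h
      rw [h1, hy, Prod.snd_sum, ← sum_sub_distrib]
      refine sum_congr rfl fun U hu => ?_
      split_ifs <;> simp
    have hmem : g - y.2 ∈ H := by
      rw [← QuotientAddGroup.eq_zero_iff]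
      have h5 : φ (∑ U ∈ J', (x U + x U)) = φ (g + ∑ U ∈ J, x U) := by
        rw [← hsum, map_sum]
      change φ (g - y.2) = 0
      rw [hy2, map_sub, map_sub, h5, map_add]; abel
    have := (hE _ hmem).union hEJ hrep
    convert this using 1
    ext <;> simp [hy1]
  · rw [card_union_of_disjoint hEJ, hcard]
    have h1 : #(J.biUnion id) ≤ #J * 2 :=
      card_biUnion_le_card_mul _ _ _ (fun U hu => (hU U (hJ hu)).1)
    nlinarith

lemma exists_max_fill [Fintype ι] [NeZero n] (hodd : Odd n) (w : ι → ℤ × ZMod n) (R : Finset ι) :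
    ∃ H : AddSubgroup (ZMod n), ∃ E : Finset ι, Disjoint E R ∧ Fills w H E ∧
      #E + 2 ≤ 2 * Nat.card H ∧ (1 < H.index → ∀ 𝒰 : Finset (Finset ι),
        (∀ U ∈ 𝒰, #U ≤ 2 ∧ ∃ x ∉ H, SRep w U (0, x)) →
        (∀ U ∈ 𝒰, ∀ V ∈ 𝒰, U ≠ V → Disjoint U V) → (∀ U ∈ 𝒰, Disjoint E U) →
        (∀ U ∈ 𝒰, Disjoint U R) → #𝒰 + 1 < H.index) := by
  classical
  let s : Set (AddSubgroup (ZMod n) × Finset ι) :=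
    {p | Disjoint p.2 R ∧ Fills w p.1 p.2 ∧ #p.2 + 2 ≤ 2 * Nat.card p.1}
  obtain ⟨⟨H, E⟩, ⟨h1, h2, h3⟩, hmax⟩ := Set.exists_max_image s (fun p => Nat.card p.1)
    (Set.toFinite s) ⟨(⊥, ∅), by
      refine ⟨by simp, ?_, by simp⟩
      intro g hg
      rw [AddSubgroup.mem_bot] at hg
      rw [hg]
      exact SRep.empty⟩
  dsimp only at h1 h2 h3 hmax
  refine ⟨H, E, h1, h2, h3, ?_⟩
  intro hm 𝒰 hU hd hdE hdR
  by_contra hcon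
  obtain ⟨H', E', hE', hlt, hf, hc⟩ := extend hodd h2 h3 hm 𝒰 hU hd hdE (by omega)
  have := hmax (H', E') ⟨by
    apply disjoint_of_subset_left hE'
    rw [disjoint_union_left, disjoint_biUnion_left]
    exact ⟨h1, hdR⟩, hf, hc⟩
  simp only at this
  omega

lemma absorb {E D : Finset ι} (hE : Fills w H E) (hdis : Disjoint E D) {z : ℤ × ZMod n}
    (hD : SRep w D z) (hz : z.1 = 0) (hg : z.2 ∈ H) (hr : ∃ i ∈ E ∪ D, (w i).1 = 1)
    (hn : n ∣ #E + #D) : Goal w := by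
  refine ⟨E ∪ D, by rwa [card_union_of_disjoint hdis], ?_, Or.inl ⟨?_, hr⟩⟩
  · obtain ⟨i, hi, _⟩ := hr; exact ⟨i, hi⟩
  · have := (hE (-z.2) (H.neg_mem hg)).union hdis hD
    convert this using 1
    ext <;> simp [hz]

/-- reflections of one class give any sum of signs of the right parity -/
lemma same_class {W : Finset ι} {c : ZMod n} (hW : ∀ i ∈ W, (w i).1 = 1 ∧ (w i).2 - c ∈ H)
    (N : ℕ) (hN : N ≤ #W) (z : ℤ) (hz : |z| ≤ N) (hpar : Even ((N : ℤ) - z)) :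
    ∃ D ⊆ W, #D = N ∧ ∃ y, SRep w D y ∧ y.1 = z ∧ y.2 - z • c ∈ H := by
  obtain ⟨D, hD, hDc⟩ := exists_subset_card_eq hN
  obtain ⟨a, ha⟩ := hpar
  rw [abs_le] at hz
  obtain ⟨b, rfl⟩ : ∃ b : ℕ, a = b := ⟨a.toNat, by omega⟩
  obtain ⟨A, hA, hAc⟩ := exists_subset_card_eq (s := D) (n := b) (by omega)
  refine ⟨D, hD, hDc, ∑ i ∈ D \ A, w i + - ∑ i ∈ A, w i, ?_, ?_, ?_⟩
  · have := (SRep.all (w := w) (D \ A)).union sdiff_disjoint (SRep.all (w := w) A).neg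
    rwa [sdiff_union_of_subset hA] at this
  · have h1 : ∀ B ⊆ D, (∑ i ∈ B, w i).1 = #B := by
      intro B hB
      rw [Prod.fst_sum, sum_congr rfl (fun i hi => (hW i (hD (hB hi))).1)]; simp
    rw [Prod.fst_add, Prod.fst_neg, h1 _ sdiff_subset, h1 _ hA, card_sdiff_of_subset hA,
      Nat.cast_sub (card_le_card hA)]
    omega
  · have h1 : ∀ B ⊆ D, (∑ i ∈ B, w i).2 - (#B : ℤ) • c ∈ H := by
      intro B hB
      have : ∑ i ∈ B, ((w i).2 - c) ∈ H := H.sum_mem fun i hi => (hW i (hD (hB hi))).2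
      rw [sum_sub_distrib, sum_const] at this
      rw [Prod.snd_sum]
      simpa using this
    have h2 := H.sub_mem (h1 (D \ A) sdiff_subset) (h1 A hA)
    have h3 : z = (#(D \ A) : ℤ) - (#A : ℤ) := by
      rw [card_sdiff_of_subset hA, Nat.cast_sub (card_le_card hA)]; omega
    rw [h3, sub_smul]
    convert h2 using 1
    simp only [Prod.snd_add, Prod.snd_neg]
    abel

lemma SRep.abs_le (hw : ∀ i, (w i).1 = 0 ∨ (w i).1 = 1) {E : Finset ι} {z : ℤ × ZMod n}
    (h : SRep w E z) : |z.1| ≤ #E := by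
  obtain ⟨e, he⟩ := h
  rw [← he, Prod.fst_sum]
  refine (abs_sum_le_sum_abs _ _).trans ?_
  have : ∀ i ∈ E, |(((e i : ℤˣ) : ℤ) • w i).1| ≤ 1 := by
    intro i hi
    rw [Prod.smul_fst, smul_eq_mul, abs_mul]
    rcases Int.units_eq_one_or (e i) with h | h <;> rcases hw i with h' | h' <;> simp [h, h']
  exact (sum_le_sum this).trans (by simp)

/-- same-class pairs -/
lemma same_pairs [NeZero n] {F : Finset ι} (hF : ∀ i ∈ F, (w i).1 = 1) (p : ℕ)
    (hp : 2 * p + H.index ≤ #F + 1) :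
    ∃ D ⊆ F, #D = 2 * p ∧ ∃ y, SRep w D y ∧ y.1 = 0 ∧ y.2 ∈ H := by
  induction p with
  | zero => exact ⟨∅, by simp, by simp, 0, SRep.empty, rfl, H.zero_mem⟩
  | succ p ih =>
    obtain ⟨D, hD, hc, y, hy, hy1, hy2⟩ := ih (by omega)
    have hcard : H.index < #(F \ D) := by rw [card_sdiff_of_subset hD]; omega
    have := Fintype.ofFinite (ZMod n ⧸ H)
    obtain ⟨a, ha, b, hb, hne, hab⟩ := Finset.exists_ne_map_eq_of_card_lt_of_maps_to
      (s := F \ D) (t := (univ : Finset (ZMod n ⧸ H)))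
      (f := fun i => (QuotientAddGroup.mk (w i).2 : ZMod n ⧸ H))
      (by rw [card_univ, ← Nat.card_eq_fintype_card]; exact hcard) (fun _ _ => by simp)
    rw [mem_sdiff] at ha hb
    have hdis : Disjoint D {a, b} := by
      rw [disjoint_insert_right, disjoint_singleton_right]; exact ⟨ha.2, hb.2⟩
    refine ⟨D ∪ {a, b}, ?_, ?_, _, hy.union hdis (SRep.pair hne), ?_, ?_⟩
    · apply union_subset hD
      intro x hx
      simp at hx
      rcases hx with rfl | rfl
      · exact ha.1
      · exact hb.1
    · rw [card_union_of_disjoint hdis, hc, card_pair hne]; ring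
    · simp [hy1, hF a ha.1, hF b hb.1]
    · rw [eq_comm, QuotientAddGroup.eq] at hab
      rw [Prod.snd_add, Prod.snd_sub]
      apply H.add_mem hy2
      convert hab using 1
      abel

/-- iterated EGZ inside a subgroup -/
lemma egz [NeZero n] {A : Finset ι} (a : ι → ZMod n) (hA : ∀ i ∈ A, a i ∈ H) (j : ℕ)
    (hc : (j + 1) * Nat.card H ≤ #A + 1) :
    ∃ D ⊆ A, #D = j * Nat.card H ∧ ∑ i ∈ D, a i = 0 := by
  classical
  have hpos : 0 < Nat.card H := Nat.card_pos
  induction j with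
  | zero => exact ⟨∅, by simp, by simp, by simp⟩
  | succ j ih =>
    have hexp : (j + 1 + 1) * Nat.card H = j * Nat.card H + 2 * Nat.card H := by ring
    have hexp' : (j + 1) * Nat.card H = j * Nat.card H + Nat.card H := by ring
    obtain ⟨D, hD, hDc, hs⟩ := ih (by omega)
    let e : ZMod (Nat.card H) ≃+ H := zmodAddCyclicAddEquiv (inferInstance : IsAddCyclic H)
    let a' : ι → ZMod (Nat.card H) := fun i => if h : a i ∈ H then e.symm ⟨a i, h⟩ else 0
    obtain ⟨B, hB, hBc, hBs⟩ := ZMod.erdos_ginzburg_ziv (s := A \ D) a' (by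
      rw [card_sdiff_of_subset hD]; omega)
    have hdis : Disjoint D B := disjoint_of_subset_right hB disjoint_sdiff
    refine ⟨D ∪ B, union_subset hD (hB.trans sdiff_subset), ?_, ?_⟩
    · rw [card_union_of_disjoint hdis, hDc, hBc]; ring
    · rw [sum_union hdis, hs, zero_add]
      have h1 : ((e (∑ i ∈ B, a' i) : H) : ZMod n) = ∑ i ∈ B, a i := by
        rw [map_sum, AddSubgroup.val_finset_sum]
        refine sum_congr rfl fun i hi => ?_
        have : a i ∈ H := hA i (mem_sdiff.mp (hB hi)).1
        simp [a', this]
      rw [← h1, hBs]; simp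
end fill

section core
variable {ι : Type*} [DecidableEq ι] {n : ℕ} {w : ι → ℤ × ZMod n} {H : AddSubgroup (ZMod n)}

lemma two_mul_log_lt {m : ℕ} (hm : 3 ≤ m) (ho : Odd m) :
    1 ≤ Nat.log 2 m ∧ 2 * Nat.log 2 m + 1 ≤ m ∧ m < 2 ^ (Nat.log 2 m + 1) := by
  have h1 : 1 ≤ Nat.log 2 m := Nat.le_log_of_pow_le (by norm_num) (by omega)
  have h2 : 2 ^ Nat.log 2 m ≤ m := Nat.pow_log_le_self 2 (by omega)
  have h3 : ∀ k, 1 ≤ k → 2 * k ≤ 2 ^ k := by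
    intro k hk
    induction k, hk using Nat.le_induction with
    | base => norm_num
    | succ k hk ih => rw [pow_succ]; omega
  have h4 := h3 _ h1
  obtain ⟨a, ha⟩ := ho
  exact ⟨h1, by omega, Nat.lt_pow_succ_log_self (by norm_num) m⟩

lemma abs_comb {a b K : ℤ} (ha : |a| ≤ K) (hb : |b| ≤ K) :
    (0 ≤ a * b → |a - b| ≤ K) ∧ (a * b ≤ 0 → |a + b| ≤ K) := by
  rw [abs_le] at ha hb
  obtain ⟨h1, h2⟩ := ha
  obtain ⟨h3, h4⟩ := hb
  constructor
  · intro h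
    rw [abs_le]
    rcases mul_nonneg_iff.mp h with ⟨h5, h6⟩ | ⟨h5, h6⟩ <;> constructor <;> linarith
  · intro h
    rw [abs_le]
    rcases mul_nonpos_iff.mp h with ⟨h5, h6⟩ | ⟨h5, h6⟩ <;> constructor <;> linarith

set_option maxHeartbeats 1000000 in
/-- majority lemma -/
lemma maj [Fintype ι] [NeZero n] (hodd : Odd n) (hw : ∀ i, (w i).1 = 0 ∨ (w i).1 = 1)
    {k κ : ℕ} (hcard : Fintype.card ι = 2 * n + k) {E W : Finset ι} (hE : Fills w H E)
    (hEW : Disjoint E W) {c : ZMod n} (hW : ∀ i ∈ W, (w i).1 = 1 ∧ (w i).2 - c ∈ H)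
    (hm : H.index < 2 ^ (κ + 1)) (hκk : κ ≤ k) (hnW : n ≤ #W) (hk : 2 * k + 1 ≤ n)
    (hEn : #E + 2 * κ + 1 ≤ n) (hκ : 1 ≤ κ) : Goal w := by
  classical
  have hEWc : #(E ∪ W) = #E + #W := card_union_of_disjoint hEW
  -- finishing step
  have fin : ∀ (J : Finset ι) (y : ℤ × ZMod n) (N t : ℕ), Disjoint J (E ∪ W) → SRep w J y →
      y.2 - y.1 • c ∈ H → #E + #J + N = t * n → |y.1| ≤ N → Even ((N : ℤ) - y.1) → N ≤ #W → 
      1 ≤ N → Goal w := by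
    intro J y N t hJ hy hyH hN hab hev hNW hN1
    obtain ⟨D, hD, hDc, x, hx, hx1, hx2⟩ := same_class hW N hNW (-y.1) (by rwa [abs_neg]) (by
      rw [Int.even_sub] at hev ⊢
      rwa [even_neg])
    rw [disjoint_union_right] at hJ
    have hJD : Disjoint J D := disjoint_of_subset_right hD hJ.2
    refine absorb hE (D := J ∪ D) ?_ (hy.union hJD hx) ?_ ?_ ?_ ?_
    · rw [disjoint_union_right]
      exact ⟨hJ.1.symm, disjoint_of_subset_right hD hEW⟩
    · simp [hx1]
    · have := H.add_mem hyH hx2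
      convert this using 1
      rw [Prod.snd_add, neg_smul]; abel
    · obtain ⟨i, hi⟩ := card_pos.mp (by omega : 0 < #D)
      exact ⟨i, by simp [hi], (hW i (hD hi)).1⟩
    · rw [card_union_of_disjoint hJD, hDc]
      exact ⟨t, by rw [mul_comm n t, ← hN]; ring⟩
  rcases Nat.even_or_odd #E with hev | hod
  swap
  · refine fin ∅ 0 (n - #E) 1 (by simp) SRep.empty (by simp) ?_ (by simp) ?_ (by omega) (by omega)
    · simp; omega
    · obtain ⟨a, ha⟩ := hodd
      obtain ⟨b, hb⟩ := hod
      exact ⟨a - b, by simp; omega⟩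
  set Y := univ \ (E ∪ W) with hY
  have hYc : #Y + #E + #W = 2 * n + k := by
    rw [hY, card_sdiff_of_subset (subset_univ _), card_univ, hcard, hEWc]
    have : #(E ∪ W) ≤ 2 * n + k := by rw [← hcard]; exact card_le_univ _
    omega
  let φ : ℤ × ZMod n →+ ZMod n := 
    { toFun := fun y => y.2 - y.1 • c
      map_zero' := by simp
      map_add' := by intro x y; simp only [Prod.snd_add, Prod.fst_add, add_smul]; abel }
  let Pr : Finset ι → Prop := fun J => ∃ y, SRep w J y ∧ y.2 - y.1 • c ∈ H ∧ |y.1| ≤ κ + 1 ∧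
    Even ((#J : ℤ) - y.1)
  obtain ⟨J, hJ, hJmax⟩ := Finset.exists_max_image (Y.powerset.filter Pr) (fun J => #J)
    ⟨∅, by
      simp only [mem_filter, mem_powerset, empty_subset, true_and]
      exact ⟨0, SRep.empty, by simp, by simp; omega, by simp⟩⟩
  simp only [mem_filter, mem_powerset] at hJ hJmax
  obtain ⟨hJY, y, hy, hyH, hyb, hye⟩ := hJ
  by_cases hlarge : κ + 1 ≤ #(Y \ J)
  · obtain ⟨Y', hY', hYc'⟩ := exists_subset_card_eq hlarge
    obtain ⟨B, hB, hBn, g, hg, e, he⟩ := pigeon (w := fun i => φ (w i)) (H := H) (Y := Y')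
      (by rwa [hYc'])
    set x := ∑ i ∈ B, ((e i : ℤˣ) : ℤ) • w i with hx
    have hxr : SRep w B x := ⟨e, rfl⟩
    have hxH : x.2 - x.1 • c ∈ H := by
      have : φ x = g := by rw [hx, map_sum, ← he]; exact sum_congr rfl fun i _ => map_zsmul φ _ _
      rw [← this] at hg
      exact hg
    have hxb := hxr.abs_le hw
    have hBc : #B ≤ κ + 1 := by rw [← hYc']; exact card_le_card hB
    have hBJ : Disjoint J B := disjoint_of_subset_right (hB.trans hY') disjoint_sdiff
    have hBY : B ⊆ Y := (hB.trans hY').trans sdiff_subset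
    have hBd : Disjoint B (E ∪ W) := disjoint_of_subset_left hBY sdiff_disjoint
    rcases Int.even_or_odd ((#B : ℤ) - x.1) with hxe | hxo
    · exfalso
      have hPr : Pr (J ∪ B) := by
        have hcu : (#(J ∪ B) : ℤ) = #J + #B := by
          rw [card_union_of_disjoint hBJ]; push_cast; rfl
        have hxb' : |x.1| ≤ (κ : ℤ) + 1 := hxb.trans (by exact_mod_cast hBc)
        obtain ⟨a, ha⟩ := hxe
        obtain ⟨b, hb⟩ := hye
        rcases le_total 0 (y.1 * x.1) with hs | hs
        · refine ⟨y + -x, hy.union hBJ hxr.neg, ?_, ?_, ?_⟩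
          · have := H.sub_mem hyH hxH
            convert this using 1
            simp only [Prod.snd_add, Prod.fst_add, Prod.snd_neg, Prod.fst_neg, add_smul, neg_smul]
            abel
          · simp only [Prod.fst_add, Prod.fst_neg]
            rw [← sub_eq_add_neg]; exact (abs_comb hyb hxb').1 hs
          · rw [hcu]; exact ⟨a + b + x.1, by simp only [Prod.fst_add, Prod.fst_neg]; linarith⟩
        · refine ⟨y + x, hy.union hBJ hxr, ?_, ?_, ?_⟩
          · have := H.add_mem hyH hxH
            convert this using 1
            simp only [Prod.snd_add, Prod.fst_add, add_smul]
            abel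
          · simp only [Prod.fst_add]
            exact (abs_comb hyb hxb').2 hs
          · rw [hcu]; exact ⟨a + b, by simp only [Prod.fst_add]; linarith⟩
      have := hJmax (J ∪ B) ⟨union_subset hJY hBY, hPr⟩
      rw [card_union_of_disjoint hBJ] at this
      have := hBn.card_pos
      omega
    · obtain ⟨a, ha⟩ := hxo
      obtain ⟨b, hb⟩ := hodd
      obtain ⟨d, hd⟩ := hev
      rw [abs_le] at hxb
      refine fin B x (n - #E - #B) 1 hBd hxr hxH (by omega) ?_ ?_ (by omega) (by omega)
      · rw [abs_le]; constructor <;> omega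
      · exact ⟨b - d - a - x.1, by omega⟩
  · have hsd : #(Y \ J) + #J = #Y := by
      rw [card_sdiff_of_subset hJY]; have := card_le_card hJY; omega
    obtain ⟨b, hb⟩ := hye
    obtain ⟨d, hd⟩ := hev
    rw [abs_le] at hyb
    refine fin J y (2 * n - #E - #J) 2 (disjoint_of_subset_left hJY sdiff_disjoint) hy hyH
      (by omega) ?_ ?_ (by omega) (by omega)
    · rw [abs_le]; constructor <;> omega
    · exact ⟨n - d - b - y.1, by omega⟩

/-- fill up with rotations from `H` -/
lemma combine {E D A : Finset ι} (hE : Fills w H E) (hED : Disjoint E D) (hEA : Disjoint E A)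
    (hDA : Disjoint D A) (hA : ∀ i ∈ A, (w i).1 = 0 ∧ (w i).2 ∈ H) {y : ℤ × ZMod n}
    (hy : SRep w D y) (hy1 : y.1 = 0) (hy2 : y.2 ∈ H) (hr : ∃ i ∈ E ∪ D, (w i).1 = 1)
    {N : ℕ} (hN : n ∣ N) (h1 : #E + #D ≤ N) (h2 : N ≤ #E + #D + #A) : Goal w := by
  obtain ⟨B, hB, hBc⟩ := exists_subset_card_eq (s := A) (n := N - #E - #D) (by omega)
  have hDB : Disjoint D B := disjoint_of_subset_right hB hDA
  refine absorb hE (D := D ∪ B) ?_ (hy.union hDB (SRep.all B)) ?_ ?_ ?_ ?_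
  · rw [disjoint_union_right]; exact ⟨hED, disjoint_of_subset_right hB hEA⟩
  · rw [Prod.fst_add, hy1, Prod.fst_sum, sum_congr rfl (fun i hi => (hA i (hB hi)).1)]; simp
  · rw [Prod.snd_add, Prod.snd_sum]
    exact H.add_mem hy2 (H.sum_mem fun i hi => (hA i (hB hi)).2)
  · obtain ⟨i, hi, h⟩ := hr
    refine ⟨i, ?_, h⟩
    rw [← union_assoc]; exact mem_union_left _ hi
  · rw [card_union_of_disjoint hDB, hBc]
    have : #E + (#D + (N - #E - #D)) = N := by omega
    rwa [this]

lemma parity_refl {E : Finset ι} (hE : ∀ i ∈ E, (w i).1 = 1) {y : ℤ × ZMod n}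
    (h : SRep w E y) : Even ((#E : ℤ) - y.1) := by
  obtain ⟨e, he⟩ := h
  rw [← he, Prod.fst_sum]
  have : (#E : ℤ) = ∑ i ∈ E, (1 : ℤ) := by simp
  rw [this, ← sum_sub_distrib]
  refine Finset.even_sum _ fun i hi => ?_
  rw [Prod.smul_fst, hE i hi]
  rcases Int.units_eq_one_or (e i) with h | h <;> simp [h]

lemma case_top [Fintype ι] [NeZero n] (hw : ∀ i, (w i).1 = 0 ∨ (w i).1 = 1) {k : ℕ}
    (hk : 1 ≤ k) (hcard : Fintype.card ι = 2 * n + k) {E R' F : Finset ι} (hE : Fills w ⊤ E)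
    (hEc : #E + 2 ≤ 2 * n) (hR' : ∀ i, i ∈ R' ↔ i ∉ E ∧ (w i).1 = 0)
    (hF : ∀ i, i ∈ F ↔ i ∉ E ∧ (w i).1 = 1) (hsum : #E + #R' + #F = 2 * n + k)
    (hres : R' = ∅ → ∀ i, (w i).1 = 1) (ht : 2 ≤ #(univ.filter (fun i => (w i).1 = 1))) :
    Goal w := by
  -- finishing
  have fin : ∀ e : ℕ, Even e → e ≤ #F → #E + e ≤ 2 * n → 2 * n ≤ #E + e + #R' →
      ((∃ i ∈ E, (w i).1 = 1) ∨ 1 ≤ e) → Goal w := by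
    intro e he heF h1 h2 h3
    obtain ⟨D, hD, hDc, y, hy, hy1, hy2⟩ := same_class (H := ⊤) (W := F) (c := 0) (w := w)
      (fun i hi => ⟨((hF i).mp hi).2, trivial⟩) e heF 0 (by simp) (by
        rw [sub_zero]; exact_mod_cast he)
    refine combine hE (D := D) (A := R') ?_ ?_ ?_ ?_ hy hy1 trivial ?_ (N := 2 * n)
      (Dvd.intro_left 2 rfl) (by omega) (by omega)
    · rw [Finset.disjoint_right]; exact fun i hi => ((hF i).mp (hD hi)).1
    · rw [Finset.disjoint_right]; exact fun i hi => ((hR' i).mp hi).1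
    · rw [Finset.disjoint_left]
      intro i hi hi'
      have h4 := ((hF i).mp (hD hi)).2
      have h5 := ((hR' i).mp hi').2
      omega
    · exact fun i hi => ⟨((hR' i).mp hi).2, trivial⟩
    · rcases h3 with ⟨i, hi, h⟩ | h3
      · exact ⟨i, mem_union_left _ hi, h⟩
      · obtain ⟨i, hi⟩ := card_pos.mp (by omega : 0 < #D)
        exact ⟨i, mem_union_right _ hi, ((hF i).mp (hD hi)).2⟩
  by_cases hr : R' = ∅
  · have hev := parity_refl (fun i _ => hres hr i) (hE 0 trivial)
    have hRc : #R' = 0 := by rw [hr]; simp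
    obtain ⟨a, ha⟩ := hev
    simp at ha
    refine fin (2 * n - #E) ⟨n - #E / 2, by omega⟩ (by omega) (by omega) (by omega) (Or.inr (by omega))
  have hRc : 0 < #R' := card_pos.mpr (nonempty_iff_ne_empty.mpr hr)
  by_cases htq : #F ≤ 2 * n - #E
  · refine fin (2 * (#F / 2)) (by simp) (by omega) (by omega) (by omega) ?_
    by_cases h2 : 2 ≤ #F
    · right; omega
    · left
      by_contra hno
      push Not at hno
      have : univ.filter (fun i => (w i).1 = 1) ⊆ F := by
        intro i hi
        rw [mem_filter] at hi
        exact (hF i).mpr ⟨fun h => hno i h hi.2, hi.2⟩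
      have := card_le_card this
      omega
  · exact fin (2 * ((2 * n - #E) / 2)) (by simp) (by omega) (by omega) (by omega) (Or.inr (by omega))

/-- pairs of arbitrary reflections, pigeonhole with length control -/
lemma pair_blocks [NeZero n] {F : Finset ι} (hF : ∀ i ∈ F, (w i).1 = 1) {k : ℕ}
    (hk : n < 2 ^ (k + 1)) (q : ℕ) (hq : 2 * (q + k) ≤ #F) :
    ∃ D ⊆ F, 2 * q ≤ #D ∧ #D ≤ 2 * (q + k) ∧ Even #D ∧ SRep w D 0 := by
  classical
  obtain ⟨X, hX, hXc⟩ := exists_subset_card_eq (s := F) (n := q + k) (by omega)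
  have hle : #X ≤ #(F \ X) := by rw [card_sdiff_of_subset hX]; omega
  obtain ⟨s, hs, hinj⟩ : ∃ s : ι → ι, (∀ i ∈ X, s i ∈ F \ X) ∧ Set.InjOn s X := by
    obtain ⟨Z, hZ, hZc⟩ := exists_subset_card_eq hle
    have e : X ≃ Z := Finset.equivOfCardEq hZc.symm
    refine ⟨fun i => if h : i ∈ X then (e ⟨i, h⟩ : ι) else i, ?_, ?_⟩
    · intro i hi
      simp only [hi, dif_pos]
      exact hZ (e ⟨i, hi⟩).2
    · intro i hi j hj hij
      rw [mem_coe] at hi hj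
      simp only [hi, hj, dif_pos] at hij
      have := e.injective (Subtype.ext hij)
      simpa using this
  obtain ⟨J, hJ, h1, h2, g, hg, e, he⟩ := pigeon_range (H := (⊥ : AddSubgroup (ZMod n)))
    (w := fun i => (w i).2 - (w (s i)).2) (Y := X) (κ := k) (by
      rw [AddSubgroup.index_bot, Nat.card_zmod]; exact hk) q (by omega)
  rw [AddSubgroup.mem_bot] at hg
  have hsX : ∀ i ∈ X, s i ∉ X := fun i hi => (mem_sdiff.mp (hs i hi)).2
  have hdis : ∀ i ∈ J, ∀ j ∈ J, i ≠ j → Disjoint ({i, s i} : Finset ι) {j, s j} := by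
    intro i hi j hj hij
    simp only [disjoint_insert_left, disjoint_singleton_left, mem_insert, mem_singleton, not_or]
    refine ⟨⟨hij, fun h => hsX j (hJ hj) (h ▸ hJ hi)⟩, fun h => hsX i (hJ hi) (h ▸ hJ hj),
      fun h => hij (hinj (hJ hi) (hJ hj) h)⟩
  have hne : ∀ i ∈ J, i ≠ s i := fun i hi h => hsX i (hJ hi) (h ▸ hJ hi)
  have hc : #(J.biUnion (fun i => {i, s i})) = #J * 2 := by
    rw [card_biUnion hdis, sum_congr rfl (fun i hi => card_pair (hne i hi))]; simp
  refine ⟨J.biUnion (fun i => {i, s i}), ?_, by omega, by omega, ?_, ?_⟩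
  · intro x hx
    rw [mem_biUnion] at hx
    obtain ⟨i, hi, hx⟩ := hx
    simp at hx
    rcases hx with rfl | rfl
    · exact hX (hJ hi)
    · exact (mem_sdiff.mp (hs i (hJ hi))).1
  · rw [hc]; simp
  · have := SRep.biUnion (w := w) J (fun i => {i, s i})
      (fun i => ((e i : ℤˣ) : ℤ) • (w i - w (s i))) hdis (by
        intro i hi
        rcases Int.units_eq_one_or (e i) with h | h
        · simpa [h] using SRep.pair (w := w) (hne i hi)
        · have := (SRep.pair (w := w) (hne i hi)).neg
          simpa [h] using this)
    convert this using 1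
    symm
    ext
    · rw [Prod.fst_sum]
      apply sum_eq_zero
      intro i hi
      rw [Prod.smul_fst, Prod.fst_sub, hF i (hX (hJ hi)), hF (s i) (mem_sdiff.mp (hs i (hJ hi))).1]
      simp
    · rw [Prod.snd_sum]
      simp only [Prod.smul_snd, Prod.snd_sub, Prod.snd_zero]
      rw [he, hg]

end core

section core
variable {ι : Type*} [DecidableEq ι] {n : ℕ} {w : ι → ℤ × ZMod n} {H : AddSubgroup (ZMod n)}

/-- units bound and its consequence -/
lemma units_bound {E R0 U' F : Finset ι} 
    (hmax : ∀ 𝒰 : Finset (Finset ι), (∀ U ∈ 𝒰, #U ≤ 2 ∧ ∃ x ∉ H, SRep w U (0, x)) →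
      (∀ U ∈ 𝒰, ∀ V ∈ 𝒰, U ≠ V → Disjoint U V) → (∀ U ∈ 𝒰, Disjoint E U) →
      (∀ U ∈ 𝒰, Disjoint U R0) → #𝒰 + 1 < H.index)
    (hU : ∀ i ∈ U', i ∉ E ∧ (w i).1 = 0 ∧ (w i).2 ∉ H ∧ i ∉ R0)
    (hF : ∀ i ∈ F, i ∉ E ∧ (w i).1 = 1 ∧ i ∉ R0) :
    #U' + 1 < H.index ∧ (2 * (H.index - 1 - #U') ≤ #F → ∃ c, ∃ W ⊆ F,
      (∀ i ∈ W, (w i).1 = 1 ∧ (w i).2 - c ∈ H) ∧ #F + #U' + 2 ≤ #W + H.index) := by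
  classical
  have key : ∀ 𝒱 : Finset (Finset ι), (∀ V ∈ 𝒱, ∃ a ∈ F, ∃ b ∈ F,
      (QuotientAddGroup.mk (w a).2 : ZMod n ⧸ H) ≠ QuotientAddGroup.mk (w b).2 ∧ V = {a, b}) →
      (∀ U ∈ 𝒱, ∀ V ∈ 𝒱, U ≠ V → Disjoint U V) → #U' + #𝒱 + 1 < H.index := by
    intro 𝒱 h1 h2
    have hsing : ∀ x ∈ U', ∀ V ∈ 𝒱, x ∉ V := by
      intro x hx V hV hxV
      obtain ⟨a, ha, b, hb, -, rfl⟩ := h1 V hV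
      have h0 := (hU x hx).2.1
      simp only [mem_insert, mem_singleton] at hxV
      rcases hxV with rfl | rfl
      · have := (hF x ha).2.1; omega
      · have := (hF x hb).2.1; omega
    have hd : Disjoint (U'.image fun x => ({x} : Finset ι)) 𝒱 := by
      rw [Finset.disjoint_left]
      intro V hV hV'
      rw [mem_image] at hV
      obtain ⟨x, hx, rfl⟩ := hV
      exact hsing x hx _ hV' (mem_singleton_self x)
    have hc : #((U'.image fun x => ({x} : Finset ι)) ∪ 𝒱) = #U' + #𝒱 := by
      rw [card_union_of_disjoint hd, card_image_of_injective _ singleton_injective]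
    rw [← hc]
    apply hmax
    · intro U hU1
      rw [mem_union, mem_image] at hU1
      rcases hU1 with ⟨x, hx, rfl⟩ | hV
      · refine ⟨by simp, (w x).2, (hU x hx).2.2.1, ?_⟩
        have := SRep.single (w := w) x
        rwa [show w x = (0, (w x).2) from Prod.ext (hU x hx).2.1 rfl] at this
      · obtain ⟨a, ha, b, hb, hab, rfl⟩ := h1 U hV
        refine ⟨card_le_two, (w a).2 - (w b).2, ?_, ?_⟩
        · intro hmem
          apply hab
          rw [eq_comm, QuotientAddGroup.eq]
          rwa [neg_add_eq_sub]
        · have hne : a ≠ b := by rintro rfl; exact hab rfl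
          have := SRep.pair (w := w) hne
          rwa [show w a - w b = (0, (w a).2 - (w b).2) from
            Prod.ext (by simp [(hF a ha).2.1, (hF b hb).2.1]) rfl] at this
    · intro U hU1 V hV1 hne
      rw [mem_union, mem_image] at hU1 hV1
      rcases hU1 with ⟨x, hx, rfl⟩ | hU1 <;> rcases hV1 with ⟨y, hy, rfl⟩ | hV1
      · rw [disjoint_singleton]; rintro rfl; exact hne rfl
      · rw [disjoint_singleton_left]; exact hsing x hx V hV1
      · rw [disjoint_singleton_right]; exact hsing y hy U hU1
      · exact h2 U hU1 V hV1 hne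
    · intro U hU1
      rw [mem_union, mem_image] at hU1
      rcases hU1 with ⟨x, hx, rfl⟩ | hV
      · rw [disjoint_singleton_right]; exact (hU x hx).1
      · obtain ⟨a, ha, b, hb, hab, rfl⟩ := h1 U hV
        simp only [disjoint_insert_right, disjoint_singleton_right]
        exact ⟨(hF a ha).1, (hF b hb).1⟩
    · intro U hU1
      rw [mem_union, mem_image] at hU1
      rcases hU1 with ⟨x, hx, rfl⟩ | hV
      · rw [disjoint_singleton_left]; exact (hU x hx).2.2.2
      · obtain ⟨a, ha, b, hb, hab, rfl⟩ := h1 U hV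
        simp only [disjoint_insert_left, disjoint_singleton_left]
        exact ⟨(hF a ha).2.2, (hF b hb).2.2⟩
  have h0 : #U' + 1 < H.index := by simpa using key ∅ (by simp) (by simp)
  refine ⟨h0, fun h2 => ?_⟩
  rcases matching F (fun x => (QuotientAddGroup.mk (w x).2 : ZMod n ⧸ H)) (H.index - 1 - #U')
    (by omega) h2 with ⟨𝒱, hVc, hV1, hV2⟩ | ⟨a, ha, h⟩
  · have := key 𝒱 hV1 hV2
    omega
  · have h := @h (Classical.decPred _)
    refine ⟨(w a).2, F.filter (fun x => ¬ (QuotientAddGroup.mk (w x).2 : ZMod n ⧸ H) ≠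
      QuotientAddGroup.mk (w a).2), filter_subset _ _, ?_, ?_⟩
    · intro i hi
      rw [mem_filter, not_not, eq_comm, QuotientAddGroup.eq, neg_add_eq_sub] at hi
      exact ⟨(hF i hi.1).2.1, hi.2⟩
    · have := card_filter_add_card_filter_not (s := F)
        (fun x => (QuotientAddGroup.mk (w x).2 : ZMod n ⧸ H) ≠ QuotientAddGroup.mk (w a).2)
      have h' : #{x ∈ F | (QuotientAddGroup.mk (w x).2 : ZMod n ⧸ H) ≠ 
        QuotientAddGroup.mk (w a).2} < H.index - 1 - #U' := by convert h
      omega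

lemma prod_ineq {h m n : ℕ} (a b : ℕ) (hmh : h * m = n) (ha : a ≤ h) (hb : b ≤ m) :
    b * h + a * m ≤ n + a * b := by
  obtain ⟨h', rfl⟩ := Nat.exists_eq_add_of_le ha
  obtain ⟨m', rfl⟩ := Nat.exists_eq_add_of_le hb
  rw [← hmh]
  nlinarith [Nat.zero_le (h' * m')]

set_option maxHeartbeats 1000000 in
theorem core_goal [Fintype ι] (hn : 3 ≤ n) (hodd : Odd n)
    (hw : ∀ i, (w i).1 = 0 ∨ (w i).1 = 1) (hcard : Fintype.card ι = 2 * n + Nat.log 2 n) :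
    Goal w := by
  classical
  haveI : NeZero n := ⟨by omega⟩
  obtain ⟨hk1, hk2, hk3⟩ := two_mul_log_lt hn hodd
  have hklog : 9 ≤ n → 3 ≤ Nat.log 2 n := fun h => Nat.le_log_of_pow_le (by norm_num) (by omega)
  have hmono : ∀ m, m ≤ n → Nat.log 2 m ≤ Nat.log 2 n := fun m h => Nat.log_mono_right h
  set k := Nat.log 2 n with hk
  clear_value k
  have hGright : ∀ (H : AddSubgroup (ZMod n)) (A : Finset ι) (j : ℕ), 
      (∀ i ∈ A, (w i).1 = 0 ∧ (w i).2 ∈ H) → (j + 1) * Nat.card H ≤ #A + 1 → 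
      j * Nat.card H = n → Goal w := by
    intro H A j hA h1 h2
    obtain ⟨D, hD, hDc, hDs⟩ := egz (fun i => (w i).2) (fun i hi => (hA i hi).2) j h1
    refine ⟨D, by rw [hDc, h2], card_pos.mp (by omega), Or.inr ⟨fun i hi => (hA i (hD hi)).1, hDs⟩⟩
  set R := univ.filter (fun i => (w i).1 = 0) with hR
  set F0 := univ.filter (fun i => (w i).1 = 1) with hF0
  have hRF : #R + #F0 = 2 * n + k := by
    rw [← hcard, ← card_univ, ← card_union_of_disjoint]
    · congr 1; ext i; simp [hR, hF0, hw i]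
    · rw [Finset.disjoint_left]; intro i; simp only [hR, hF0, mem_filter, mem_univ, true_and]; omega
  by_cases hRbig : 2 * n - 1 ≤ #R
  · exact hGright ⊤ R 1 (fun i hi => ⟨(mem_filter.mp hi).2, trivial⟩) 
      (by simp; omega) (by simp)
  obtain ⟨R0, hR0, hR0c, hR0n⟩ : ∃ R0 ⊆ R, #R0 ≤ 1 ∧ (R0 = ∅ → R = ∅) := by
    rcases R.eq_empty_or_nonempty with h | ⟨i, hi⟩
    · exact ⟨∅, by simp, by simp, fun _ => h⟩
    · exact ⟨{i}, by simpa using hi, by simp, by simp⟩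
  obtain ⟨H, E, hER, hE, hEc, hmax⟩ := exists_max_fill hodd w R0
  have hmh : Nat.card H * H.index = n := by
    rw [AddSubgroup.card_mul_index, Nat.card_zmod]
  set R' := univ.filter (fun i => i ∉ E ∧ (w i).1 = 0) with hR'
  set F := univ.filter (fun i => i ∉ E ∧ (w i).1 = 1) with hF
  have hsum : #E + #R' + #F = 2 * n + k := by
    rw [← hcard, ← card_univ, ← card_union_of_disjoint, ← card_union_of_disjoint]
    · congr 1; ext i
      have := hw i
      simp only [hR', hF, mem_union, mem_filter, mem_univ, true_and, iff_true]
      tauto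
    · rw [Finset.disjoint_left]; intro i
      simp only [hR', hF, mem_union, mem_filter, mem_univ, true_and]
      rintro (h | h) ⟨h1, h2⟩
      · exact h1 h
      · omega
    · rw [Finset.disjoint_left]; intro i h
      simp only [hR', mem_filter, mem_univ, true_and]
      tauto
  have hR0E : ∀ i ∈ R0, i ∉ E := fun i hi hiE => Finset.disjoint_left.mp hER hiE hi
  have hR0w : ∀ i ∈ R0, (w i).1 = 0 := fun i hi => (mem_filter.mp (hR0 hi)).2
  have hmem_R' : ∀ i, i ∈ R' ↔ i ∉ E ∧ (w i).1 = 0 := fun i => by simp [hR']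
  have hmem_F : ∀ i, i ∈ F ↔ i ∉ E ∧ (w i).1 = 1 := fun i => by simp [hF]
  rcases Nat.lt_or_ge 1 H.index with hm1 | hm1
  swap
  · have hm : H.index = 1 := by
      have : H.index ≠ 0 := by intro h; rw [h] at hmh; omega
      omega
    have hT : H = ⊤ := AddSubgroup.index_eq_one.mp hm
    subst hT
    refine case_top hw hk1 hcard hE ?_ hmem_R' hmem_F hsum ?_ (by rw [← hF0]; omega)
    · rw [hm, mul_one] at hmh
      rwa [hmh] at hEc
    · intro hR'e i
      have h0 : R0 = ∅ := by
        rw [eq_empty_iff_forall_notMem]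
        intro i hi
        have : i ∈ R' := (hmem_R' i).mpr ⟨hR0E i hi, hR0w i hi⟩
        rw [hR'e] at this
        simp at this
      have h1 := hR0n h0
      rcases hw i with h | h
      · exfalso
        have : i ∈ R := by simp [hR, h]
        rw [h1] at this
        simp at this
      · exact h
  have hmax := hmax hm1
  set m := H.index with hm
  set h := Nat.card H with hh
  have hmodd : Odd m := Nat.Odd.of_mul_right (m := h) (by rw [hmh]; exact hodd)
  have hhodd : Odd h := Nat.Odd.of_mul_left (n := m) (by rw [hmh]; exact hodd)
  have hm3 : 3 ≤ m := by obtain ⟨a, ha⟩ := hmodd; omega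
  have hh1 : 1 ≤ h := by obtain ⟨a, ha⟩ := hhodd; omega
  set A := R'.filter (fun i => (w i).2 ∈ H) with hA
  set U := R'.filter (fun i => ¬ (w i).2 ∈ H) with hU
  have hAU : #A + #U = #R' := card_filter_add_card_filter_not _
  set U' := U \ R0 with hU'
  have hUc : #U ≤ #U' + 1 := by
    have : #U ≤ #U' + #R0 := card_le_card_sdiff_add_card
    omega
  obtain ⟨hUb, hL⟩ := units_bound (w := w) (H := H) (E := E) (R0 := R0) (U' := U') (F := F) hmax (by
    intro i hi
    simp only [hU', hU, mem_sdiff, mem_filter, hmem_R'] at hi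
    tauto) (by
    intro i hi
    rw [hmem_F] at hi
    refine ⟨hi.1, hi.2, fun h => ?_⟩
    have := hR0w i h
    omega)
  rw [← hm] at hUb hL
  have hAH : ∀ i ∈ A, (w i).1 = 0 ∧ (w i).2 ∈ H := by
    intro i hi
    simp only [hA, mem_filter, hmem_R'] at hi
    exact ⟨hi.1.2, hi.2⟩
  have hEA : Disjoint E A := by
    rw [Finset.disjoint_right]
    intro i hi
    simp only [hA, mem_filter, hmem_R'] at hi
    exact hi.1.1
  have hEF : Disjoint E F := by
    rw [Finset.disjoint_right]
    intro i hi
    exact ((hmem_F i).mp hi).1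
  have hFA : Disjoint F A := by
    rw [Finset.disjoint_left]
    intro i hi hi'
    have h1 := ((hmem_F i).mp hi).2
    have h2 := (hAH i hi').1
    omega
  have hF1 : ∀ i ∈ F, (w i).1 = 1 := fun i hi => ((hmem_F i).mp hi).2
  -- combine specialised
  have comb : ∀ D ⊆ F, ∀ y, SRep w D y → y.1 = 0 → y.2 ∈ H → 
      ((∃ i ∈ E, (w i).1 = 1) ∨ 1 ≤ #D) → #E + #D ≤ n → n ≤ #E + #D + #A → Goal w := by
    intro D hD y hy hy1 hy2 hr h1 h2
    refine combine hE (disjoint_of_subset_right hD hEF) hEA (disjoint_of_subset_left hD hFA) hAH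
      hy hy1 hy2 ?_ (dvd_refl n) h1 h2
    rcases hr with ⟨i, hi, h⟩ | h
    · exact ⟨i, mem_union_left _ hi, h⟩
    · obtain ⟨i, hi⟩ := card_pos.mp h
      exact ⟨i, mem_union_right _ hi, hF1 i (hD hi)⟩
  by_cases hA0 : #A = 0
  · have e1 : 2 * h + m ≤ n + 2 := by
      have := prod_ineq 1 2 hmh (by omega) (by omega)
      omega
    have e2 : 2 * h + 2 * m ≤ 2 * n + 2 := by
      have := prod_ineq 1 1 hmh (by omega) (by omega)
      omega
    obtain ⟨c, W, hWF, hW, hWc⟩ := hL (by omega)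
    obtain ⟨q1, q2, q3⟩ := two_mul_log_lt hm3 hmodd
    have q4 := hmono m (by nlinarith)
    exact maj hodd hw hcard hE (disjoint_of_subset_right hWF hEF) hW q3 q4 (by omega) hk2 
      (by omega) q1
  by_cases hh3 : 3 ≤ h
  · have e1 : 3 * m ≤ n := by rw [← hmh]; exact Nat.mul_le_mul_right _ hh3
    have e2 : 3 * h ≤ n := by rw [← hmh, mul_comm 3]; exact Nat.mul_le_mul_left _ hm3
    have e3 := hklog (by omega)
    have e4 : 3 * h + 2 * m ≤ n + 6 := by
      have := prod_ineq 2 3 hmh (by omega) (by omega)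
      omega
    by_cases hFm : m + 1 ≤ #F
    · obtain ⟨D, hD, hDc, y, hy, hy1, hy2⟩ := same_pairs (H := H) hF1 
        (min ((#F + 1 - m) / 2) ((n - #E) / 2)) (by omega)
      exact comb D hD y hy hy1 hy2 (Or.inr (by omega)) (by omega) (by omega)
    · by_cases hEr : ∃ i ∈ E, (w i).1 = 1
      · exact comb ∅ (by simp) 0 SRep.empty rfl (by simp) (Or.inl hEr) (by simp; omega) 
          (by simp; omega)
      · exact hGright H A m hAH (by rw [add_mul, mul_comm m, hmh]; omega) 
          (by rw [mul_comm, hmh])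
  · have hh' : h = 1 := by obtain ⟨a, ha⟩ := hhodd; omega
    have hmn : m = n := by rw [hh', one_mul] at hmh; exact hmh
    have hE0 : #E = 0 := by omega
    by_cases hAn : n ≤ #A
    · exact hGright H A n hAH (by rw [← hh, hh']; omega) (by rw [← hh, hh', mul_one])
    by_cases hKF : 2 * (m - 1 - #U') ≤ #F
    · obtain ⟨c, W, hWF, hW, hWc⟩ := hL hKF
      obtain ⟨D, hD, hDc, y, hy, hy1, hy2⟩ := same_class hW (2 * min (#W / 2) ((n - 1) / 2)) 
        (by omega) 0 (by rw [abs_zero]; positivity) (by simp)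
      obtain ⟨b, hb⟩ := hodd
      exact comb D (hD.trans hWF) y hy hy1 (by simpa using hy2) (Or.inr (by omega)) (by omega) 
        (by omega)
    · by_cases hUk : #U ≤ k
      · obtain ⟨D, hD, hDc, y, hy, hy1, hy2⟩ := same_pairs (H := H) hF1 
          (min ((#F + 1 - n) / 2) ((n - 1) / 2)) (by omega)
        obtain ⟨b, hb⟩ := hodd
        exact comb D hD y hy hy1 hy2 (Or.inr (by omega)) (by omega) (by omega)
      · obtain ⟨D, hD, h1, h2, h3, hy⟩ := pair_blocks hF1 hk3 ((n - #A + 1) / 2) (by omega)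
        exact comb D hD 0 hy rfl (by simp) (Or.inr (by omega)) (by omega) (by omega)

end core


section final
variable {n : ℕ}
open DihedralGroup

lemma prod_map_r_s16 (l : List (ZMod n)) : (l.map (fun a => (r a : DihedralGroup n))).prod = r l.sum := by
  induction l with
  | nil => simp
  | cons a l ih => simp [ih]

lemma zip_pairs (lx ly : List (ZMod n)) (h : lx.length = ly.length) :
    ∃ l : List (DihedralGroup n), (l : Multiset (DihedralGroup n)) =
      (lx : Multiset (ZMod n)).map (fun a => sr a) + (ly : Multiset (ZMod n)).map (fun a => sr a) ∧
      l.prod = r (lx.sum - ly.sum) := by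
  induction lx generalizing ly with
  | nil =>
    cases ly with
    | nil => exact ⟨[], by simp, by simp⟩
    | cons y ly => simp at h
  | cons x lx ih =>
    cases ly with
    | nil => simp at h
    | cons y ly =>
      obtain ⟨l, h1, h2⟩ := ih ly (by simpa using h)
      refine ⟨sr y :: sr x :: l, ?_, ?_⟩
      · rw [← Multiset.cons_coe, ← Multiset.cons_coe, h1, ← Multiset.cons_coe, ← Multiset.cons_coe,
          Multiset.map_cons, Multiset.map_cons, Multiset.cons_add, Multiset.add_cons,
          Multiset.cons_swap]
      · rw [List.prod_cons, List.prod_cons, h2, ← mul_assoc, sr_mul_sr, r_mul_r]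
        congr 1
        simp only [List.sum_cons]; ring

lemma one_prod_of (P M X Y : Multiset (ZMod n)) (h : X.card = Y.card) (hX : X ≠ 0)
    (hs : P.sum - M.sum + (X.sum - Y.sum) = 0) :
    IsOneProdSeq (P.map (fun a => (r a : DihedralGroup n)) + M.map (fun a => r a) +
      (X.map (fun a => sr a) + Y.map (fun a => sr a))) := by
  obtain ⟨x, hx⟩ := Multiset.exists_mem_of_ne_zero hX
  obtain ⟨X, rfl⟩ := Multiset.exists_cons_of_mem hx
  have hY : Y ≠ 0 := by rintro rfl; simp at h
  obtain ⟨y, hy⟩ := Multiset.exists_mem_of_ne_zero hY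
  obtain ⟨Y, rfl⟩ := Multiset.exists_cons_of_mem hy
  induction P using Quotient.inductionOn with | _ P => ?_
  induction M using Quotient.inductionOn with | _ M => ?_
  induction X using Quotient.inductionOn with | _ X => ?_
  induction Y using Quotient.inductionOn with | _ Y => ?_
  simp only [Multiset.quot_mk_to_coe] at *
  obtain ⟨l, h1, h2⟩ := zip_pairs X Y (by simpa using h)
  refine ⟨P.map (fun a => r a) ++ [sr y] ++ M.map (fun a => r a) ++ [sr x] ++ l, ?_, ?_⟩
  · simp only [← Multiset.coe_add, h1, Multiset.map_cons, ← Multiset.map_coe, 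
      ← Multiset.singleton_add, Multiset.coe_singleton, Multiset.map_add,
      Multiset.map_singleton]
    abel
  · simp only [List.prod_append, prod_map_r_s16, h2, List.prod_singleton, r_mul_sr, sr_mul_r, sr_mul_sr,
      r_mul_r]
    rw [one_def]
    congr 1
    simp at hs
    linear_combination hs

def code : DihedralGroup n → ℤ × ZMod n
  | r a => (0, a)
  | sr b => (1, b)

lemma code_01 (g : DihedralGroup n) : (code g).1 = 0 ∨ (code g).1 = 1 := by
  cases g <;> simp [code]

lemma eq_r {g : DihedralGroup n} (h : (code g).1 = 0) : g = r (code g).2 := by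
  cases g <;> simp [code] at *

lemma eq_sr {g : DihedralGroup n} (h : (code g).1 = 1) : g = sr (code g).2 := by
  cases g <;> simp [code] at *

lemma sum_sign {ι M : Type*} [DecidableEq ι] [AddCommGroup M] (f : ι → M) (ε : ι → ℤˣ) (A : Finset ι) :
    ∑ i ∈ A, ((ε i : ℤˣ) : ℤ) • f i = ∑ i ∈ A.filter (fun i => ε i = 1), f i -
      ∑ i ∈ A.filter (fun i => ¬ ε i = 1), f i := by
  rw [← sum_filter_add_sum_filter_not A (fun i => ε i = 1), sub_eq_add_neg, ← sum_neg_distrib]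
  congr 1
  · exact sum_congr rfl fun i hi => by simp [(mem_filter.mp hi).2]
  · refine sum_congr rfl fun i hi => ?_
    rcases Int.units_eq_one_or (ε i) with h | h
    · exact absurd h (mem_filter.mp hi).2
    · simp [h]

lemma goal_to_prod {ι : Type*} [DecidableEq ι] (g : ι → DihedralGroup n) 
    (h : Goal (fun i => code (g i))) : ∃ E : Finset ι, n ∣ #E ∧ E.Nonempty ∧ 
      IsOneProdSeq (E.val.map g) := by
  obtain ⟨E, hE, hne, h⟩ := h
  refine ⟨E, hE, hne, ?_⟩
  rcases h with ⟨⟨ε, hε⟩, i0, hi0, hr⟩ | ⟨h0, hs⟩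
  · set E0 := E.filter (fun i => (code (g i)).1 = 0) with hE0
    set E1 := E.filter (fun i => ¬ (code (g i)).1 = 0) with hE1
    have m0 : ∀ i ∈ E0, (code (g i)).1 = 0 := fun i hi => (mem_filter.mp hi).2
    have m1 : ∀ i ∈ E1, (code (g i)).1 = 1 := fun i hi =>
      (code_01 (g i)).resolve_left (mem_filter.mp hi).2
    have key := one_prod_of 
      ((E0.filter (fun i => ε i = 1)).val.map (fun i => (code (g i)).2))
      ((E0.filter (fun i => ¬ ε i = 1)).val.map (fun i => (code (g i)).2))
      ((E1.filter (fun i => ε i = 1)).val.map (fun i => (code (g i)).2))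
      ((E1.filter (fun i => ¬ ε i = 1)).val.map (fun i => (code (g i)).2))
    have hcardXY : #(E1.filter (fun i => ε i = 1)) = #(E1.filter (fun i => ¬ ε i = 1)) := by
      have h1 := congrArg Prod.fst hε
      rw [Prod.fst_sum] at h1
      simp only [Prod.smul_fst, Prod.fst_zero] at h1
      rw [← sum_filter_add_sum_filter_not E (fun i => (code (g i)).1 = 0), ← hE0, ← hE1,
        sum_eq_zero (fun i hi => by rw [m0 i hi, smul_zero]), zero_add, 
        sum_congr rfl (fun i hi => by rw [m1 i hi]), sum_sign (fun _ => (1 : ℤ))] at h1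
      simp only [sum_const, nsmul_eq_mul, mul_one] at h1
      omega
    have hc1 := card_filter_add_card_filter_not (s := E1) (fun i => ε i = 1)
    have hpos : 0 < #E1 := card_pos.mpr ⟨i0, mem_filter.mpr ⟨hi0, by 
      have : (code (g i0)).1 = 1 := hr
      omega⟩⟩
    have key := key (by rw [Multiset.card_map, Multiset.card_map]; exact hcardXY) (by
      intro h
      have := congrArg Multiset.card h
      simp only [Multiset.card_map, Multiset.card_zero, card_val] at this
      omega) (by
      have h1 := congrArg Prod.snd hε
      rw [Prod.snd_sum] at h1
      simp only [Prod.smul_snd, Prod.snd_zero] at h1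
      rw [← sum_filter_add_sum_filter_not E (fun i => (code (g i)).1 = 0), ← hE0, ← hE1,
        sum_sign, sum_sign] at h1
      exact h1)
    convert key using 1
    have hsplit : E.val = E0.val + E1.val := (Multiset.filter_add_not _ _).symm
    have hs0 : E0.val = (E0.filter (fun i => ε i = 1)).val + (E0.filter (fun i => ¬ ε i = 1)).val :=
      (Multiset.filter_add_not _ _).symm
    have hs1 : E1.val = (E1.filter (fun i => ε i = 1)).val + (E1.filter (fun i => ¬ ε i = 1)).val :=
      (Multiset.filter_add_not _ _).symm
    rw [hsplit, Multiset.map_add, 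
      Multiset.map_congr rfl (fun i (hi : i ∈ E0.val) => eq_r (m0 i hi)),
      Multiset.map_congr rfl (fun i (hi : i ∈ E1.val) => eq_sr (m1 i hi)), hs0, hs1]
    simp only [Multiset.map_add, Multiset.map_map, Function.comp_def]
  · refine ⟨(E.toList.map (fun i => (code (g i)).2)).map (fun a => r a), ?_, ?_⟩
    · rw [Multiset.map_congr rfl (fun i (hi : i ∈ E.val) => eq_r (h0 i hi))]
      rw [List.map_map, ← Multiset.map_coe, Finset.coe_toList]
      rfl
    · rw [prod_map_r_s16, Finset.sum_map_toList, one_def]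
      exact congrArg _ hs

theorem upper (hn : 3 ≤ n) (hodd : Odd n) (S : Multiset (DihedralGroup n))
    (hS : 2 * n + Nat.log 2 n ≤ Multiset.card S) :
    ∃ T, T ≤ S ∧ T ≠ 0 ∧ n ∣ Multiset.card T ∧ IsOneProdSeq T := by
  induction S using Quotient.inductionOn with | _ l => ?_
  simp only [Multiset.quot_mk_to_coe] at *
  set l' := l.take (2 * n + Nat.log 2 n) with hl'
  have hlen : l'.length = 2 * n + Nat.log 2 n := by
    rw [hl', List.length_take]; simpa using hS
  have hle : (l' : Multiset (DihedralGroup n)) ≤ l := (List.take_sublist _ _).subperm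
  obtain ⟨E, h1, h2, h3⟩ := goal_to_prod (n := n) (fun i : Fin l'.length => l'.get i)
    (core_goal hn hodd (fun i => code_01 _) (by rw [Fintype.card_fin, hlen]))
  refine ⟨_, ?_, ?_, ?_, h3⟩
  · refine le_trans ?_ hle
    have := Multiset.map_le_map (f := fun i : Fin l'.length => l'.get i) 
      (Finset.val_le_iff.mpr (subset_univ E))
    rwa [Fin.univ_val_map, List.ofFn_get] at this
  · intro h
    have := congrArg Multiset.card h
    simp at this
    exact h2.ne_empty this
  · simpa using h1

lemma le_map_exists {α β : Type*} (f : α → β) (T : Multiset β) (M : Multiset α)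
    (h : T ≤ M.map f) : ∃ M' ≤ M, T = M'.map f := by
  induction T using Quotient.inductionOn with | _ t => ?_
  induction M using Quotient.inductionOn with | _ m => ?_
  simp only [Multiset.quot_mk_to_coe, Multiset.map_coe, Multiset.coe_le] at *
  obtain ⟨l, hl, hs⟩ := h
  obtain ⟨l', hl', rfl⟩ := List.sublist_map_iff.mp hs
  exact ⟨l', hl'.subperm, by rw [Multiset.map_coe]; exact (Multiset.coe_eq_coe.mpr hl).symm⟩

lemma list_prod_form (l : List (DihedralGroup n)) : ∀ (N : ℕ) (s : Finset ℕ), 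
    (l : Multiset (DihedralGroup n)) = Multiset.replicate N (sr 0) + 
      s.val.map (fun i => r ((2 ^ i : ℤ) : ZMod n)) →
    ∃ ε : ℕ → ℤˣ, l.prod = if Even N then r ((∑ i ∈ s, (ε i : ℤ) * 2 ^ i : ℤ) : ZMod n) else
      sr ((∑ i ∈ s, (ε i : ℤ) * 2 ^ i : ℤ) : ZMod n) := by
  induction l with
  | nil => 
    intro N s h
    have h := congrArg Multiset.card h
    simp only [Multiset.coe_nil, Multiset.card_zero, Multiset.card_add, Multiset.card_replicate,
      Multiset.card_map, Finset.card_val] at h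
    obtain rfl : N = 0 := by omega
    obtain rfl : s = ∅ := card_eq_zero.mp (by omega)
    exact ⟨1, by simp⟩
  | cons a l ih =>
    intro N s h
    rw [← Multiset.cons_coe] at h
    have ha : a ∈ Multiset.replicate N (sr 0) + 
      s.val.map (fun i => (r ((2 ^ i : ℤ) : ZMod n) : DihedralGroup n)) := by
      rw [← h]; exact Multiset.mem_cons_self _ _
    rw [Multiset.mem_add, Multiset.mem_replicate, Multiset.mem_map] at ha
    rcases ha with ⟨hN, rfl⟩ | ⟨i, hi, rfl⟩
    · obtain ⟨N, rfl⟩ := Nat.exists_eq_succ_of_ne_zero hN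
      rw [Nat.succ_eq_add_one, Multiset.replicate_succ, Multiset.cons_add, 
        Multiset.cons_inj_right] at h
      obtain ⟨ε, hε⟩ := ih N s h
      refine ⟨ε, ?_⟩
      rw [List.prod_cons, hε]
      by_cases hE : Even N
      · have : ¬ Even (N + 1) := by rw [Nat.even_add_one]; simpa using hE
        simp [hE]
      · have : Even (N + 1) := by rw [Nat.even_add_one]; exact hE
        simp [hE, this]
    · have hi : i ∈ s := hi
      have hs : s = insert i (s.erase i) := (insert_erase hi).symm
      have hni : i ∉ s.erase i := notMem_erase i s
      rw [hs, Finset.insert_val_of_notMem hni, Multiset.map_cons, Multiset.add_cons,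
        Multiset.cons_inj_right] at h
      obtain ⟨ε, hε⟩ := ih N _ h
      have hup : ∀ u : ℤˣ, ∑ j ∈ s, ((Function.update ε i u j : ℤˣ) : ℤ) * 2 ^ j = 
          u * 2 ^ i + ∑ j ∈ s.erase i, (ε j : ℤ) * 2 ^ j := by
        intro u
        rw [← add_sum_erase s _ hi, Function.update_self]
        congr 1
        refine sum_congr rfl fun j hj => ?_
        rw [Function.update_of_ne (ne_of_mem_erase hj)]
      by_cases hE : Even N
      · refine ⟨Function.update ε i 1, ?_⟩
        rw [List.prod_cons, hε, hup, if_pos hE, if_pos hE, r_mul_r]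
        congr 1
        push_cast; ring
      · refine ⟨Function.update ε i (-1), ?_⟩
        rw [List.prod_cons, hε, hup, if_neg hE, if_neg hE, r_mul_sr]
        congr 1
        push_cast; ring

lemma signed_pow_ne {s : Finset ℕ} (hs : s.Nonempty) (ε : ℕ → ℤˣ) :
    ∑ i ∈ s, (ε i : ℤ) * 2 ^ i ≠ 0 := by
  intro h
  set i := s.min' hs with hi
  have him : i ∈ s := s.min'_mem hs
  rw [← add_sum_erase s _ him] at h
  have hd : (2 : ℤ) ^ (i + 1) ∣ ∑ j ∈ s.erase i, (ε j : ℤ) * 2 ^ j := by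
    refine dvd_sum fun j hj => Dvd.dvd.mul_left (pow_dvd_pow 2 ?_) _
    have h1 := s.min'_le j (mem_of_mem_erase hj)
    have h2 := ne_of_mem_erase hj
    omega
  have h3 : (2 : ℤ) ^ (i + 1) ∣ (ε i : ℤ) * 2 ^ i := by
    rw [eq_neg_of_add_eq_zero_left h]; exact (dvd_neg).mpr hd
  have h4 : (2 : ℤ) ^ (i + 1) ∣ 2 ^ i := by
    rcases Int.units_eq_one_or (ε i) with h | h <;> simpa [h] using h3
  have h5 := Int.le_of_dvd (by positivity) h4
  have h6 : (0 : ℤ) < 2 ^ i := by positivity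
  rw [pow_succ] at h5
  linarith

lemma signed_pow_lt {s : Finset ℕ} {k : ℕ} (hs : s ⊆ range k) (ε : ℕ → ℤˣ) :
    |∑ i ∈ s, (ε i : ℤ) * 2 ^ i| < 2 ^ k := by
  have h1 : |∑ i ∈ s, (ε i : ℤ) * 2 ^ i| ≤ ∑ i ∈ s, (2 : ℤ) ^ i := by
    refine (abs_sum_le_sum_abs _ _).trans (sum_le_sum fun i _ => ?_)
    rcases Int.units_eq_one_or (ε i) with h | h <;> simp [h]
  have h2 : ∑ i ∈ s, (2 : ℤ) ^ i ≤ ∑ i ∈ range k, (2 : ℤ) ^ i :=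
    sum_le_sum_of_subset_of_nonneg hs fun _ _ _ => by positivity
  have h3 : ∀ k : ℕ, ∑ i ∈ range k, (2 : ℤ) ^ i = 2 ^ k - 1 := by
    intro k
    induction k with
    | zero => simp
    | succ k ih => rw [sum_range_succ, ih, pow_succ]; ring
  rw [h3] at h2
  linarith

theorem lower (hn : 3 ≤ n) (hodd : Odd n) : ∃ S : Multiset (DihedralGroup n), 
    2 * n + Nat.log 2 n = Multiset.card S + 1 ∧
    ¬ ∃ T, T ≤ S ∧ T ≠ 0 ∧ n ∣ Multiset.card T ∧ IsOneProdSeq T := by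
  classical
  set k := Nat.log 2 n with hk
  have h2k : 2 ^ k ≤ n := Nat.pow_log_le_self 2 (by omega)
  refine ⟨Multiset.replicate (2 * n - 1) (sr 0) + 
      (range k).val.map (fun i => r ((2 ^ i : ℤ) : ZMod n)), by simp; omega, ?_⟩
  rintro ⟨T, hT, hT0, hTn, l, hl, hprod⟩
  set B := (range k).val.map (fun i => (r ((2 ^ i : ℤ) : ZMod n) : DihedralGroup n)) with hB
  have hsub : T - B ≤ Multiset.replicate (2 * n - 1) (sr 0) := tsub_le_iff_right.mpr hT
  obtain ⟨N, hN, hN'⟩ := Multiset.le_replicate_iff.mp hsub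
  obtain ⟨M, hM, hM'⟩ := le_map_exists _ (T ∩ B) _ (Multiset.inter_le_right : T ∩ B ≤ B)
  have hnd : M.Nodup := Multiset.nodup_of_le hM (range k).nodup
  have hTe : T = Multiset.replicate N (sr 0) + 
      (⟨M, hnd⟩ : Finset ℕ).val.map (fun i => r ((2 ^ i : ℤ) : ZMod n)) := by
    rw [← hM', ← hN', Multiset.sub_add_inter]
  obtain ⟨ε, hε⟩ := list_prod_form l N ⟨M, hnd⟩ (hl.trans hTe)
  rw [hprod] at hε
  by_cases hE : Even N
  · rw [if_pos hE, one_def] at hε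
    have hz := (r.inj hε).symm
    rw [ZMod.intCast_zmod_eq_zero_iff_dvd] at hz
    have hlt := signed_pow_lt (s := ⟨M, hnd⟩) (k := k) (Finset.val_le_iff.mp hM) ε
    have hz0 := Int.eq_zero_of_abs_lt_dvd hz (lt_of_lt_of_le hlt (by exact_mod_cast h2k))
    have hMe : (⟨M, hnd⟩ : Finset ℕ) = ∅ := by
      by_contra hne
      exact signed_pow_ne (nonempty_iff_ne_empty.mpr hne) ε hz0
    rw [hMe] at hTe
    simp at hTe
    rw [hTe] at hTn hT0
    simp at hTn hT0
    have h2n : 2 * n ∣ N := by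
      refine Nat.Coprime.mul_dvd_of_dvd_of_dvd ?_ hE.two_dvd hTn
      exact (Nat.coprime_two_left).mpr hodd
    have := Nat.le_of_dvd (Nat.pos_of_ne_zero fun h => hT0 (by rw [h]; rfl)) h2n
    omega
  · rw [if_neg hE, one_def] at hε
    cases hε

end final

end development

/-- Let `n ≥ 3` be odd.  Then `s_{nℕ}(D_{2n}) = 2n + ⌊log₂ n⌋`. -/
theorem stmt16 (n : ℕ) (hn : 3 ≤ n) (hodd : Odd n) :
    IsLeast {ℓ : ℕ | ∀ S : Multiset (DihedralGroup n), ℓ ≤ Multiset.card S →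
        ∃ T, T ≤ S ∧ T ≠ 0 ∧ n ∣ Multiset.card T ∧ IsOneProdSeq T}
      (2 * n + Nat.log 2 n) := by
  refine ⟨fun S hS => upper hn hodd S hS, fun ℓ hℓ => ?_⟩
  by_contra hlt
  obtain ⟨S, hS, hno⟩ := lower hn hodd
  exact hno (hℓ S (by omega))
end

section
/- Let n ≥ 3 and d be positive integers with d odd and n | d. The sequence W = x^{[2d−1]} · (y^{2⁰}, y^{2¹}, …, y^{2^{⌊log₂ n⌋−1}}) over the dihedral group D_{2n} (2d−1 copies of x together with the elements y^{2^i} for 0 ≤ i ≤ ⌊log₂ n⌋−1), which has length 2d + ⌊log₂ n⌋ − 1, has no nonempty 1-product subsequence T with |T| ≡ 0 (mod d). -/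
open DihedralGroup in
theorem stmt17_key (n : ℕ) (l : List (DihedralGroup n)) : ∀ (a : ℕ) (s : Finset ℕ),
    (l : Multiset (DihedralGroup n)) = Multiset.replicate a (sr 0) +
      s.val.map (fun i => (r 1 : DihedralGroup n) ^ (2 ^ i)) →
    ∃ ε : ℕ → ℤ, (∀ i, |ε i| = 1) ∧
      l.prod = if Even a then r ((∑ i ∈ s, ε i * 2 ^ i : ℤ) : ZMod n)
        else sr ((∑ i ∈ s, ε i * 2 ^ i : ℤ) : ZMod n) := by
  induction l with
  | nil =>
    intro a s h
    have hc := congrArg Multiset.card h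
    simp at hc
    obtain ⟨rfl, rfl⟩ : a = 0 ∧ s = ∅ := by
      refine ⟨by omega, Finset.card_eq_zero.mp (by omega)⟩
    exact ⟨fun _ => 1, by simp, by simp⟩
  | cons g l ih =>
    intro a s h
    have hg : g ∈ Multiset.replicate a (sr 0) +
      s.val.map (fun i => (r 1 : DihedralGroup n) ^ (2 ^ i)) := by
      rw [← h]; simp
    rw [← Multiset.cons_coe] at h
    rcases Multiset.mem_add.mp hg with hg | hg
    · obtain ⟨ha, rfl⟩ := Multiset.mem_replicate.mp hg
      obtain ⟨b, rfl⟩ := Nat.exists_eq_succ_of_ne_zero ha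
      rw [Multiset.replicate_succ, Multiset.cons_add, Multiset.cons_inj_right] at h
      obtain ⟨ε, h1, h2⟩ := ih b s h
      refine ⟨ε, h1, ?_⟩
      rw [List.prod_cons, h2]
      by_cases hb : Even b <;> simp [hb, Nat.even_add_one]
    · obtain ⟨j, hj, rfl⟩ := Multiset.mem_map.mp hg
      have hj' : j ∈ s := hj
      have hs : s.val = j ::ₘ (s.erase j).val := by
        rw [Finset.erase_val]; exact (Multiset.cons_erase hj).symm
      rw [hs, Multiset.map_cons, Multiset.add_cons, Multiset.cons_inj_right] at h
      obtain ⟨ε, h1, h2⟩ := ih a (s.erase j) h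
      have hsum : ∀ c : ℤ, ∑ i ∈ s, (Function.update ε j c) i * 2 ^ i
          = c * 2 ^ j + ∑ i ∈ s.erase j, ε i * 2 ^ i := by
        intro c
        rw [← Finset.add_sum_erase _ _ hj']
        congr 1
        · simp
        · refine Finset.sum_congr rfl fun i hi => ?_
          rw [Function.update_of_ne (Finset.ne_of_mem_erase hi)]
      refine ⟨Function.update ε j (if Even a then 1 else -1), ?_, ?_⟩
      · intro i
        by_cases hi : i = j
        · subst hi; by_cases hb : Even a <;> simp [hb]
        · rw [Function.update_of_ne hi]; exact h1 i
      · rw [List.prod_cons, h2, hsum]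
        by_cases hb : Even a
        · simp [hb]
        · simp [hb]; ring

theorem stmt17_bound (ε : ℕ → ℤ) (h : ∀ i, |ε i| = 1) (k : ℕ) (s : Finset ℕ)
    (hs : ∀ i ∈ s, i < k) : |∑ i ∈ s, ε i * 2 ^ i| < 2 ^ k := by
  have h1 : |∑ i ∈ s, ε i * 2 ^ i| ≤ ∑ i ∈ s, (2 : ℤ) ^ i := by
    refine (Finset.abs_sum_le_sum_abs _ _).trans (le_of_eq ?_)
    refine Finset.sum_congr rfl fun i _ => ?_
    rw [abs_mul, h, one_mul, abs_of_pos (by positivity)]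
  have h2 : ∑ i ∈ s, (2 : ℤ) ^ i < 2 ^ k := by
    exact_mod_cast Nat.geomSum_lt (le_refl 2) hs
  omega

theorem stmt17_ne (ε : ℕ → ℤ) (h : ∀ i, |ε i| = 1) (s : Finset ℕ)
    (hs : s.Nonempty) : ∑ i ∈ s, ε i * 2 ^ i ≠ 0 := by
  intro h0
  have hm := s.max'_mem hs
  rw [← Finset.add_sum_erase _ _ hm] at h0
  have hb := stmt17_bound ε h (s.max' hs) (s.erase (s.max' hs))
    (fun i hi => s.lt_max'_of_mem_erase_max' hs hi)
  rw [eq_neg_of_add_eq_zero_right h0, abs_neg, abs_mul, h, one_mul,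
    abs_of_pos (by positivity)] at hb
  exact lt_irrefl _ hb

/-- Let `n ≥ 3` and `d` be positive integers with `d` odd and `n ∣ d`.  The sequence
`W = x^{[2d−1]}·(y^{2⁰}, y^{2¹}, …, y^{2^{⌊log₂ n⌋−1}})` over `D_{2n}` has length
`2d + ⌊log₂ n⌋ − 1` and has no nonempty 1-product subsequence of length divisible
by `d`. -/
theorem stmt17 (n d : ℕ) (hn : 3 ≤ n) (hd : 0 < d) (hodd : Odd d) (hnd : n ∣ d) :
    Multiset.card
        (Multiset.replicate (2 * d - 1) (DihedralGroup.sr 0 : DihedralGroup n) +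
          (Multiset.range (Nat.log 2 n)).map
            (fun i => (DihedralGroup.r 1 : DihedralGroup n) ^ (2 ^ i))) =
      2 * d + Nat.log 2 n - 1 ∧
    ∀ T, T ≤ Multiset.replicate (2 * d - 1) (DihedralGroup.sr 0 : DihedralGroup n) +
          (Multiset.range (Nat.log 2 n)).map
            (fun i => (DihedralGroup.r 1 : DihedralGroup n) ^ (2 ^ i)) →
      T ≠ 0 → d ∣ Multiset.card T → ¬ IsOneProdSeq T := by
  refine ⟨by simp; omega, ?_⟩
  rintro T hT hT0 hdT ⟨l, hl, hprod⟩
  obtain ⟨A, hA, B, hB, rfl⟩ : ∃ A, A ≤ Multiset.replicate (2 * d - 1)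
      (DihedralGroup.sr 0 : DihedralGroup n) ∧ ∃ B, B ≤ (Multiset.range (Nat.log 2 n)).map
            (fun i => (DihedralGroup.r 1 : DihedralGroup n) ^ (2 ^ i)) ∧ T = A + B := by
    classical
    refine ⟨T ∩ _, Multiset.inter_le_right, T - _, Multiset.sub_le_iff_le_add'.mpr hT, ?_⟩
    rw [add_comm, Multiset.sub_add_inter]
  obtain ⟨a, ha, rfl⟩ := Multiset.le_replicate_iff.mp hA
  obtain ⟨u, hu, rfl⟩ : ∃ u ≤ Multiset.range (Nat.log 2 n),
      u.map (fun i => (DihedralGroup.r 1 : DihedralGroup n) ^ (2 ^ i)) = B := by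
    obtain ⟨L, rfl⟩ : ∃ L : List (DihedralGroup n), (L : Multiset _) = B := Quot.exists_rep B
    rw [← Multiset.coe_range, Multiset.map_coe, Multiset.coe_le] at hB
    obtain ⟨L', hp, hsub⟩ := hB
    obtain ⟨M, hM, rfl⟩ := List.sublist_map_iff.mp hsub
    refine ⟨M, ?_, ?_⟩
    · rw [← Multiset.coe_range, Multiset.coe_le]; exact hM.subperm
    · rw [Multiset.map_coe]; exact Multiset.coe_eq_coe.mpr hp
  have hnd' : u.Nodup := Multiset.nodup_of_le hu (Multiset.nodup_range _)
  obtain ⟨ε, h1, h2⟩ := stmt17_key n l a ⟨u, hnd'⟩ hl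
  rw [hprod, DihedralGroup.one_def] at h2
  by_cases hev : Even a
  · simp only [hev, if_true, DihedralGroup.r.injEq] at h2
    have hdvd := (ZMod.intCast_zmod_eq_zero_iff_dvd _ n).mp h2.symm
    by_cases hne : (⟨u, hnd'⟩ : Finset ℕ).Nonempty
    · have hb := stmt17_bound ε h1 (Nat.log 2 n) ⟨u, hnd'⟩
        (fun i hi => Multiset.mem_range.mp (Multiset.mem_of_le hu hi))
      have hlog : (2 : ℤ) ^ Nat.log 2 n ≤ n := by
        exact_mod_cast Nat.pow_log_le_self 2 (by omega)
      exact stmt17_ne ε h1 _ hne (Int.eq_zero_of_abs_lt_dvd hdvd (by omega))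
    · have hu0 : u = 0 := by
        simpa [Finset.not_nonempty_iff_eq_empty, ← Finset.val_eq_zero] using hne
      subst hu0
      simp at hdT hT0
      obtain ⟨c, rfl⟩ := hdT
      have hc : c < 2 := by
        by_contra hc
        have : d * 2 ≤ d * c := Nat.mul_le_mul_left d (by omega)
        omega
      have : c ≠ 0 := by rintro rfl; simp at hT0
      obtain rfl : c = 1 := by omega
      rw [mul_one] at hev
      exact (Nat.not_even_iff_odd.mpr hodd) hev
  · simp only [hev, if_false] at h2
    cases h2
end

section
/- Let n ≥ 3 and d be positive integers with gcd(n, d) = 1. The sequence W = x · y^{[nd−1]} over the dihedral group D_{2n} (one copy of x together with nd−1 copies of y), which has length nd, has no nonempty 1-product subsequence T with |T| ≡ 0 (mod d). -/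
/-- The sign character of the dihedral group. -/
def dihSign (n : ℕ) : DihedralGroup n →* ℤˣ where
  toFun g := match g with
    | .r _ => 1
    | .sr _ => -1
  map_one' := rfl
  map_mul' a b := by
    rcases a with a | a <;> rcases b with b | b <;> simp

/-- Let `n ≥ 3` and `d` be positive integers with `gcd(n, d) = 1`.  The sequence
`W = x·y^{[nd−1]}` over `D_{2n}`, of length `nd`, has no nonempty 1-product
subsequence of length divisible by `d`. -/
theorem stmt18 (n d : ℕ) (hn : 3 ≤ n) (hd : 0 < d) (hgcd : Nat.gcd n d = 1) :
    Multiset.card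
        ((DihedralGroup.sr 0 : DihedralGroup n) ::ₘ
          Multiset.replicate (n * d - 1) (DihedralGroup.r 1 : DihedralGroup n)) =
      n * d ∧
    ∀ T, T ≤ (DihedralGroup.sr 0 : DihedralGroup n) ::ₘ
          Multiset.replicate (n * d - 1) (DihedralGroup.r 1 : DihedralGroup n) →
      T ≠ 0 → d ∣ Multiset.card T → ¬ IsOneProdSeq T := by
  have hpos : 0 < n * d := Nat.mul_pos (by omega) hd
  refine ⟨by simp; omega, ?_⟩
  rintro T hT hT0 hdvd ⟨l, rfl, hl⟩
  by_cases hx : (DihedralGroup.sr 0 : DihedralGroup n) ∈ (l : Multiset (DihedralGroup n))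
  · obtain ⟨T', hT'⟩ := Multiset.exists_cons_of_mem hx
    rw [hT', Multiset.cons_le_cons_iff, Multiset.le_replicate_iff] at hT
    obtain ⟨k, hk, rfl⟩ := hT
    have h1 : ((l : Multiset (DihedralGroup n)).map (dihSign n)).prod = 1 := by
      rw [Multiset.map_coe, Multiset.prod_coe, ← map_list_prod, hl, map_one]
    rw [hT'] at h1
    have ha : dihSign n (DihedralGroup.sr 0) = -1 := rfl
    have hb : dihSign n (DihedralGroup.r 1) = 1 := rfl
    simp [ha, hb] at h1
  · rw [Multiset.le_cons_of_notMem hx, Multiset.le_replicate_iff] at hT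
    obtain ⟨k, hk, hT⟩ := hT
    rw [← Multiset.coe_replicate, Multiset.coe_eq_coe, List.perm_replicate] at hT
    subst hT
    have hk0 : n ∣ k := by
      rw [List.prod_replicate, DihedralGroup.r_one_pow, DihedralGroup.one_def] at hl
      injection hl with hl
      exact (ZMod.natCast_eq_zero_iff k n).1 hl
    have hdk : d ∣ k := by simpa using hdvd
    have := Nat.Coprime.mul_dvd_of_dvd_of_dvd hgcd hk0 hdk
    have : k = 0 := Nat.eq_zero_of_dvd_of_lt this (by omega)
    subst this
    simp at hT0
end
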